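/- arXiv:2406.17506 — 4 statements merged into one kernel-verified Lean document; each statement's English description precedes it below -/
import Mathlib

section
/- Let L > 0 and let f : E → ℝ be a differentiable function on a real inner product space E such that f is convex and x ↦ (L/2)‖x‖² − f(x) is convex (i.e. f ∈ F_{0,L}), and assume f_* := inf_x f(x) > −∞. Fix an integer N ≥ 1 and a stepsize γ > 0 with γL ∈ (0,2) and γL ≠ 1, and let x_{i+1} = x_i − γ∇f(x_i) for i = 0,…,N−1. Then (1/(2L))·‖∇f(x_N)‖² ≤ (f(x_0) − f_*) / ( 1 + γL · min{ 2N , (−1 + (1−γL)^{−2N})/(γL) } ). -/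
open scoped InnerProductSpace

section FirstOrder

variable {E : Type*} [NormedAddCommGroup E] [InnerProductSpace ℝ E] [CompleteSpace E]

theorem ConvexOn.add_inner_gradient_le {f : E → ℝ} (hf : ConvexOn ℝ Set.univ f) {z g : E}
    (hg : HasGradientAt f g z) (y : E) : f z + ⟪g, y - z⟫_ℝ ≤ f y := by
  have hline : ConvexOn ℝ Set.univ (f ∘ AffineMap.lineMap (k := ℝ) z y) := by
    simpa using hf.comp_affineMap (AffineMap.lineMap (k := ℝ) z y)
  have hderiv : HasDerivAt (f ∘ AffineMap.lineMap (k := ℝ) z y) ⟪g, y - z⟫_ℝ 0 := by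
    have h := hg.hasFDerivAt
    rw [← AffineMap.lineMap_apply_zero (k := ℝ) z y] at h
    simpa using h.comp_hasDerivAt (0 : ℝ) AffineMap.hasDerivAt_lineMap
  have h := hline.le_slope_of_hasDerivAt (Set.mem_univ 0) (Set.mem_univ 1) one_pos hderiv
  simp only [slope_def_field, Function.comp_apply, AffineMap.lineMap_apply_one,
    AffineMap.lineMap_apply_zero, sub_zero, div_one] at h
  linarith

theorem le_add_inner_gradient_add_of_smooth {L : ℝ} {f : E → ℝ}
    (hsmooth : ConvexOn ℝ Set.univ (fun z => L / 2 * ‖z‖ ^ 2 - f z)) {z g : E}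
    (hg : HasGradientAt f g z) (y : E) :
    f y ≤ f z + ⟪g, y - z⟫_ℝ + L / 2 * ‖y - z‖ ^ 2 := by
  have hgrad : HasGradientAt (fun z => L / 2 * ‖z‖ ^ 2 - f z) (L • z - g) z := by
    have h := (((hasFDerivAt_id z).norm_sq).const_mul (L / 2)).sub hg.hasFDerivAt
    rw [hasGradientAt_iff_hasFDerivAt]
    refine h.congr_fderiv ?_
    ext v
    simp
    ring
  have h := hsmooth.add_inner_gradient_le hgrad y
  rw [inner_sub_left, inner_smul_left, inner_sub_right z y z, real_inner_self_eq_norm_sq] at h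
  rw [norm_sub_sq_real, real_inner_comm z y]
  simp only [conj_trivial] at h
  linarith

theorem gradient_interpolation {L : ℝ} (hL : 0 < L) {f : E → ℝ} (hdiff : Differentiable ℝ f)
    (hcvx : ConvexOn ℝ Set.univ f)
    (hsmooth : ConvexOn ℝ Set.univ (fun z => L / 2 * ‖z‖ ^ 2 - f z)) (y z : E) :
    f z + ⟪gradient f z, y - z⟫_ℝ + 1 / (2 * L) * ‖gradient f y - gradient f z‖ ^ 2 ≤ f y := by
  set d := gradient f y - gradient f z with hd
  have h₁ := hcvx.add_inner_gradient_le (hdiff z).hasGradientAt (y - (1 / L) • d)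
  have h₂ := le_add_inner_gradient_add_of_smooth hsmooth (hdiff y).hasGradientAt
    (y - (1 / L) • d)
  have h₃ : ⟪gradient f y, d⟫_ℝ - ⟪gradient f z, d⟫_ℝ = ‖d‖ ^ 2 := by
    rw [← inner_sub_left, ← hd, real_inner_self_eq_norm_sq]
  rw [sub_right_comm, inner_sub_right, real_inner_smul_right] at h₁
  rw [sub_sub_cancel_left, inner_neg_right, real_inner_smul_right, norm_neg, norm_smul, mul_pow,
    Real.norm_eq_abs, sq_abs] at h₂
  have h₄ : L / 2 * ((1 / L) ^ 2 * ‖d‖ ^ 2) = 1 / (2 * L) * ‖d‖ ^ 2 := by field_simp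
  have h₅ : 1 / L * ‖d‖ ^ 2 = 2 * (1 / (2 * L) * ‖d‖ ^ 2) := by field_simp
  rw [← h₃, mul_sub, h₃] at h₅
  linarith

theorem iInf_add_norm_gradient_sq_le {L : ℝ} (hL : 0 < L) {f : E → ℝ}
    (hdiff : Differentiable ℝ f)
    (hsmooth : ConvexOn ℝ Set.univ (fun z => L / 2 * ‖z‖ ^ 2 - f z))
    (hbdd : BddBelow (Set.range f)) (y : E) :
    (⨅ z, f z) + 1 / (2 * L) * ‖gradient f y‖ ^ 2 ≤ f y := by
  have h₁ := ciInf_le hbdd (y - (1 / L) • gradient f y)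
  have h₂ := le_add_inner_gradient_add_of_smooth hsmooth (hdiff y).hasGradientAt
    (y - (1 / L) • gradient f y)
  rw [sub_sub_cancel_left, inner_neg_right, real_inner_smul_right, norm_neg, norm_smul, mul_pow,
    Real.norm_eq_abs, sq_abs, real_inner_self_eq_norm_sq] at h₂
  have h₄ : L / 2 * ((1 / L) ^ 2 * ‖gradient f y‖ ^ 2)
      = 1 / (2 * L) * ‖gradient f y‖ ^ 2 := by field_simp
  have h₅ : 1 / L * ‖gradient f y‖ ^ 2 = 2 * (1 / (2 * L) * ‖gradient f y‖ ^ 2) := by field_simp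
  linarith

end FirstOrder

/-- A gradient descent trajectory with stepsize `γ`, described by the values `φ`, gradients `G` and
iterates `x` of a convex function with `1`-Lipschitz gradient. -/
structure IsDescentTrajectory {E : Type*} [NormedAddCommGroup E] [InnerProductSpace ℝ E]
    (γ : ℝ) (φ : ℕ → ℝ) (G x : ℕ → E) : Prop where
  step : ∀ i, x (i + 1) = x i - γ • G i
  interpolation : ∀ i j, φ j + ⟪G j, x i - x j⟫_ℝ + 1 / 2 * ‖G i - G j‖ ^ 2 ≤ φ i

/-- The slack in the interpolation inequality between the iterates `i` and `j`. -/
noncomputable def interpolationGap {E : Type*} [NormedAddCommGroup E] [InnerProductSpace ℝ E]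
    (φ : ℕ → ℝ) (G x : ℕ → E) (i j : ℕ) : ℝ :=
  φ i - φ j - ⟪G j, x i - x j⟫_ℝ - 1 / 2 * ‖G i - G j‖ ^ 2

/-- The sublinear excess `(2nγ - ((1 - γ)^(-2n) - 1)) / γ²` with `γ = 1 + β`: it is nonnegative
exactly in the long-step regime. -/
noncomputable def regimeGap (β : ℝ) (n : ℕ) : ℝ :=
  (2 * n * (1 + β) - ((β ^ 2)⁻¹ ^ n - 1)) / (1 + β) ^ 2

section Regime

variable {β : ℝ}

theorem sq_mul_inv_sq_pow_succ (hβ : 0 < β) (n : ℕ) :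
    β ^ 2 * (β ^ 2)⁻¹ ^ (n + 1) = (β ^ 2)⁻¹ ^ n := by
  rw [pow_succ' (β ^ 2)⁻¹, mul_inv_cancel_left₀ (by positivity)]

theorem mul_one_sub_sq_le_inv_sq_pow (hβ : 0 < β) (n : ℕ) :
    n * (1 - β ^ 2) ≤ (β ^ 2)⁻¹ ^ n - 1 := by
  have hb : 0 < β ^ 2 := by positivity
  have h₁ : 1 - β ^ 2 ≤ (β ^ 2)⁻¹ - 1 := by
    have : (β ^ 2)⁻¹ - 1 - (1 - β ^ 2) = (1 - β ^ 2) ^ 2 * (β ^ 2)⁻¹ := by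
      field_simp
    have : 0 ≤ (1 - β ^ 2) ^ 2 * (β ^ 2)⁻¹ := by positivity
    linarith
  have h₂ := one_add_mul_le_pow (a := (β ^ 2)⁻¹ - 1)
    (by linarith [inv_pos.mpr hb]) n
  rw [add_sub_cancel] at h₂
  nlinarith [Nat.cast_nonneg (α := ℝ) n]

theorem regimeGap_zero : regimeGap β 0 = 0 := by simp [regimeGap]

theorem regimeGap_succ (hβ : 0 < β) (n : ℕ) :
    regimeGap β (n + 1)
      = regimeGap β n + 1 - (1 - β) * (((β ^ 2)⁻¹ ^ (n + 1) - 1) / (1 + β)) := by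
  have h := sq_mul_inv_sq_pow_succ hβ n
  unfold regimeGap
  rw [← h]
  have : 1 + β ≠ 0 := by positivity
  field_simp
  push_cast
  ring

theorem regimeGap_le (hβ : 0 < β) (n : ℕ) : regimeGap β n ≤ n := by
  have h := mul_one_sub_sq_le_inv_sq_pow hβ n
  unfold regimeGap
  rw [div_le_iff₀ (by positivity)]
  linarith

theorem regimeGap_mul_sq (hβ : 0 < β) (n : ℕ) :
    regimeGap β n * (1 + β) ^ 2 = 2 * n * (1 + β) - ((β ^ 2)⁻¹ ^ n - 1) := by
  unfold regimeGap
  field_simp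

theorem le_two_mul_of_regimeGap_neg (hβ : 1 / 2 ≤ β) (hβ1 : β < 1) (n : ℕ)
    (hreg : 0 ≤ regimeGap β n) (hneg : regimeGap β (n + 1) < 0) :
    2 * β - 1 ≤ 2 * (n + 1 : ℕ) * (1 - β) := by
  have hβ0 : 0 < β := by linarith
  by_contra! hc
  have hsucc := regimeGap_succ hβ0 n
  have hpow : (β ^ 2)⁻¹ ^ (n + 1) * (1 - β) ≤ 1 := by
    rw [inv_pow, inv_mul_le_iff₀ (by positivity), mul_one, ← pow_mul]
    have := one_add_mul_le_pow (a := β - 1) (by linarith) (2 * (n + 1))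
    rw [add_sub_cancel] at this
    push_cast at this hc ⊢
    linarith
  have : (1 - β) * (((β ^ 2)⁻¹ ^ (n + 1) - 1) / (1 + β)) ≤ 1 := by
    rw [← mul_div_assoc, div_le_one (by linarith)]
    linarith
  linarith

end Regime

namespace IsDescentTrajectory

variable {E : Type*} [NormedAddCommGroup E] [InnerProductSpace ℝ E]
  {γ β : ℝ} {φ : ℕ → ℝ} {G x : ℕ → E}

theorem gap_nonneg (h : IsDescentTrajectory γ φ G x) (i j : ℕ) :
    0 ≤ interpolationGap φ G x i j := by
  unfold interpolationGap
  linarith [h.interpolation i j]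

theorem gap_succ_right (h : IsDescentTrajectory γ φ G x) (i : ℕ) :
    interpolationGap φ G x i (i + 1) = φ i - φ (i + 1) - γ * ⟪G i, G (i + 1)⟫_ℝ
      - 1 / 2 * (‖G i‖ ^ 2 - 2 * ⟪G i, G (i + 1)⟫_ℝ + ‖G (i + 1)‖ ^ 2) := by
  rw [interpolationGap, h.step, sub_sub_cancel, real_inner_smul_right, norm_sub_sq_real,
    real_inner_comm (G i) (G (i + 1))]

theorem gap_succ_left (h : IsDescentTrajectory γ φ G x) (i : ℕ) :
    interpolationGap φ G x (i + 1) i = φ (i + 1) - φ i + γ * ‖G i‖ ^ 2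
      - 1 / 2 * (‖G i‖ ^ 2 - 2 * ⟪G i, G (i + 1)⟫_ℝ + ‖G (i + 1)‖ ^ 2) := by
  rw [interpolationGap, h.step, sub_sub_cancel_left, inner_neg_right, real_inner_smul_right,
    norm_sub_sq_real, real_inner_comm (G i) (G (i + 1)), real_inner_self_eq_norm_sq]
  ring

theorem gap_add_two_right (h : IsDescentTrajectory γ φ G x) (i : ℕ) :
    interpolationGap φ G x i (i + 2) = φ i - φ (i + 2)
      - γ * (⟪G i, G (i + 2)⟫_ℝ + ⟪G (i + 1), G (i + 2)⟫_ℝ)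
      - 1 / 2 * (‖G i‖ ^ 2 - 2 * ⟪G i, G (i + 2)⟫_ℝ + ‖G (i + 2)‖ ^ 2) := by
  have hx : x i - x (i + 2) = γ • (G i + G (i + 1)) := by
    rw [h.step (i + 1), h.step i]
    module
  rw [interpolationGap, hx, real_inner_smul_right, inner_add_right, norm_sub_sq_real,
    real_inner_comm (G i) (G (i + 2)), real_inner_comm (G (i + 1)) (G (i + 2))]

theorem gap_add_two_left (h : IsDescentTrajectory γ φ G x) (i : ℕ) :
    interpolationGap φ G x (i + 2) i = φ (i + 2) - φ i
      + γ * (‖G i‖ ^ 2 + ⟪G i, G (i + 1)⟫_ℝ)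
      - 1 / 2 * (‖G i‖ ^ 2 - 2 * ⟪G i, G (i + 2)⟫_ℝ + ‖G (i + 2)‖ ^ 2) := by
  have hx : x (i + 2) - x i = -(γ • (G i + G (i + 1))) := by
    rw [h.step (i + 1), h.step i]
    module
  rw [interpolationGap, hx, inner_neg_right, real_inner_smul_right, inner_add_right,
    norm_sub_sq_real, real_inner_comm (G i) (G (i + 2)), real_inner_self_eq_norm_sq]
  ring

theorem norm_sq_smul_add (β : ℝ) (p r : E) :
    ‖β • p + r‖ ^ 2 = β ^ 2 * ‖p‖ ^ 2 + 2 * β * ⟪p, r⟫_ℝ + ‖r‖ ^ 2 := by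
  rw [norm_add_sq_real, norm_smul, real_inner_smul_left, mul_pow, Real.norm_eq_abs, sq_abs]
  ring

theorem norm_sq_succ_le (h : IsDescentTrajectory γ φ G x) (hγ : 0 < γ) (hγ2 : γ ≤ 2) (i : ℕ) :
    ‖G (i + 1)‖ ^ 2 ≤ ‖G i‖ ^ 2 := by
  have h₁ := h.gap_nonneg i (i + 1)
  have h₂ := h.gap_nonneg (i + 1) i
  rw [h.gap_succ_right] at h₁
  rw [h.gap_succ_left] at h₂
  have h₃ := sq_nonneg ‖G i - G (i + 1)‖
  rw [norm_sub_sq_real] at h₃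
  nlinarith

/-- With stepsize at most `3 / 2`, every step decreases the value sufficiently. -/
theorem short_step (h : IsDescentTrajectory γ φ G x) (hγ : 0 < γ) (hγ2 : γ ≤ 3 / 2) (n : ℕ) :
    n * γ * ‖G n‖ ^ 2 ≤ φ 0 - φ n := by
  induction n with
  | zero => simp
  | succ n ih =>
    have h₁ := h.gap_nonneg n (n + 1)
    have h₂ := h.gap_nonneg (n + 1) n
    rw [h.gap_succ_right] at h₁
    rw [h.gap_succ_left] at h₂
    have h₃ := sq_nonneg ‖G n - G (n + 1)‖
    rw [norm_sub_sq_real] at h₃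
    have h₄ := mul_le_mul_of_nonneg_left (h.norm_sq_succ_le hγ (by linarith) n)
      (by positivity : 0 ≤ n * γ)
    push_cast
    nlinarith

theorem gap_add_gap (h : IsDescentTrajectory (1 + β) φ G x) (n : ℕ) :
    2 * β * (interpolationGap φ G x n (n + 1) + interpolationGap φ G x (n + 1) n)
      = (1 - β) * ‖β • G n + G (n + 1)‖ ^ 2
        + (1 + β) * (β ^ 2 * ‖G n‖ ^ 2 - ‖G (n + 1)‖ ^ 2) := by
  rw [h.gap_succ_right, h.gap_succ_left, norm_sq_smul_add]
  ring

theorem one_step_identity (h : IsDescentTrajectory (1 + β) φ G x) {A A' u : ℝ}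
    (hA : β ^ 2 * (A' + 1) = A + 1) (hu : (1 + β) * u = A') (n : ℕ) :
    A * ‖G n‖ ^ 2 + 2 * (φ n - φ (n + 1))
      = A' * ‖G (n + 1)‖ ^ 2 + (1 - (1 - β) * u) * ‖β • G n + G (n + 1)‖ ^ 2
        + 2 * (1 + β * u) * interpolationGap φ G x n (n + 1)
        + 2 * (β * u) * interpolationGap φ G x (n + 1) n := by
  obtain rfl : A = β ^ 2 * (A' + 1) - 1 := by linarith
  subst hu
  rw [h.gap_succ_right, h.gap_succ_left, norm_sq_smul_add]
  ring

theorem two_step_identity (h : IsDescentTrajectory (1 + β) φ G x) (n : ℕ) :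
    ‖β • G n + G (n + 1)‖ ^ 2 + (1 - β) * interpolationGap φ G x n (n + 1)
      = ‖β • G (n + 1) + G (n + 2)‖ ^ 2
        + (1 - β) * interpolationGap φ G x (n + 2) (n + 1)
        + interpolationGap φ G x n (n + 2) + β * interpolationGap φ G x (n + 2) n := by
  have h₁ := h.gap_succ_left (n + 1)
  rw [add_assoc, one_add_one_eq_two] at h₁
  rw [h.gap_succ_right, h₁, h.gap_add_two_right, h.gap_add_two_left, norm_sq_smul_add,
    norm_sq_smul_add]
  ring

/-- The potential inequality valid as long as the long-step regime lasts. -/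
theorem long_step (h : IsDescentTrajectory (1 + β) φ G x) (hβ : 1 / 2 ≤ β) (hβ1 : β < 1) (n : ℕ)
    (hreg : ∀ j ≤ n, 0 ≤ regimeGap β j) :
    ((β ^ 2)⁻¹ ^ (n + 1) - 1) * ‖G (n + 1)‖ ^ 2
        + regimeGap β (n + 1) * ‖β • G n + G (n + 1)‖ ^ 2
        + 2 * (1 + β * (((β ^ 2)⁻¹ ^ (n + 1) - 1) / (1 + β))) * interpolationGap φ G x n (n + 1)
        + 2 * (β * (((β ^ 2)⁻¹ ^ (n + 1) - 1) / (1 + β))) * interpolationGap φ G x (n + 1) n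
      ≤ 2 * (φ 0 - φ (n + 1)) := by
  have hβ0 : 0 < β := by linarith
  have hstep (k : ℕ) := h.one_step_identity (A := (β ^ 2)⁻¹ ^ k - 1)
    (A' := (β ^ 2)⁻¹ ^ (k + 1) - 1) (u := ((β ^ 2)⁻¹ ^ (k + 1) - 1) / (1 + β))
    (by linarith [sq_mul_inv_sq_pow_succ hβ0 k]) (by field_simp) k
  induction n with
  | zero =>
    have h₀ := hstep 0
    have h₁ := regimeGap_succ hβ0 0
    rw [regimeGap_zero, zero_add (1 : ℝ)] at h₁
    rw [h₁]
    simp only [pow_zero, sub_self, zero_mul, zero_add] at h₀ ⊢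
    exact h₀.ge
  | succ n ih =>
    have hih := ih fun j hj => hreg j (by lia)
    have hs := hstep (n + 1)
    have h₂ := h.two_step_identity n
    have hT := hreg (n + 1) le_rfl
    have hsucc := regimeGap_succ hβ0 (n + 1)
    have hle := regimeGap_le hβ0 (n + 1)
    have hbern := mul_one_sub_sq_le_inv_sq_pow hβ0 (n + 1)
    set u := ((β ^ 2)⁻¹ ^ (n + 1) - 1) / (1 + β) with hu
    have hwu : (1 - β) * (n + 1 : ℕ) ≤ u := by
      rw [hu, le_div_iff₀ (by linarith)]
      linarith
    have hu0 : 0 ≤ u := le_trans (mul_nonneg (by linarith) (Nat.cast_nonneg _)) hwu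
    have hcoef : 0 ≤ 2 * (1 + β * u) - (1 - β) * regimeGap β (n + 1) := by
      have := mul_le_mul_of_nonneg_left hle (by linarith : 0 ≤ 1 - β)
      nlinarith
    have e₁ := mul_nonneg hcoef (h.gap_nonneg n (n + 1))
    have e₂ := mul_nonneg (mul_nonneg hβ0.le hu0) (h.gap_nonneg (n + 1) n)
    have e₃ := mul_nonneg hT (h.gap_nonneg n (n + 2))
    have e₄ := mul_nonneg (mul_nonneg hT hβ0.le) (h.gap_nonneg (n + 2) n)
    have e₅ := mul_nonneg (mul_nonneg hT (by linarith : 0 ≤ 1 - β))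
      (h.gap_nonneg (n + 2) (n + 1))
    have h₃ := congrArg (fun a => regimeGap β (n + 1) * a) h₂
    beta_reduce at h₃
    rw [hsucc]
    simp only [add_assoc, one_add_one_eq_two] at *
    linarith

/-- The first iterate past the long-step regime already satisfies the sublinear rate. -/
theorem first_sublinear_step (h : IsDescentTrajectory (1 + β) φ G x) (hβ : 1 / 2 ≤ β)
    (hβ1 : β < 1) (n : ℕ) (hreg : ∀ j ≤ n, 0 ≤ regimeGap β j) (hneg : regimeGap β (n + 1) < 0) :
    2 * (n + 1 : ℕ) * (1 + β) * ‖G (n + 1)‖ ^ 2 ≤ 2 * (φ 0 - φ (n + 1)) := by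
  have hβ0 : 0 < β := by linarith
  have hw : 0 < 1 - β := by linarith
  have hlong := h.long_step hβ hβ1 n hreg
  have hmul := regimeGap_mul_sq hβ0 (n + 1)
  have hsucc := regimeGap_succ hβ0 n
  have hn := hreg n le_rfl
  have hmono := h.norm_sq_succ_le (by linarith) (by linarith) n
  have hgap := h.gap_add_gap n
  have q₁ := h.gap_nonneg n (n + 1)
  have q₂ := h.gap_nonneg (n + 1) n
  set u := ((β ^ 2)⁻¹ ^ (n + 1) - 1) / (1 + β) with hu
  obtain ⟨δ, hδ⟩ : ∃ δ, regimeGap β (n + 1) = -((1 - β) * δ) :=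
    ⟨-regimeGap β (n + 1) / (1 - β), by field_simp⟩
  have hδ0 : 0 ≤ δ := by
    by_contra! hc
    nlinarith
  have hδu : δ ≤ u := by
    by_contra! hc
    nlinarith
  have e₁ := mul_nonneg (mul_nonneg hβ0.le (sub_nonneg.mpr hδu)) (add_nonneg q₁ q₂)
  have e₂ := congrArg (fun a => δ * a) hgap
  beta_reduce at e₂
  have e₃ := mul_le_mul_of_nonneg_left hmono
    (by positivity : 0 ≤ δ * (1 + β) * β ^ 2)
  have e₄ : (β ^ 2)⁻¹ ^ (n + 1) - 1
      = 2 * (n + 1 : ℕ) * (1 + β) + (1 - β) * δ * (1 + β) ^ 2 := by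
    rw [hδ] at hmul
    linarith
  rw [hδ, e₄] at hlong
  linarith

/-- Past the long-step regime, the sublinear rate propagates. -/
theorem sublinear_step (h : IsDescentTrajectory (1 + β) φ G x) (hβ : 0 < β)
    (hβ1 : β < 1) (n : ℕ) (hn : 2 * β - 1 ≤ 2 * n * (1 - β))
    (ih : 2 * n * (1 + β) * ‖G n‖ ^ 2 ≤ 2 * (φ 0 - φ n)) :
    2 * (n + 1 : ℕ) * (1 + β) * ‖G (n + 1)‖ ^ 2 ≤ 2 * (φ 0 - φ (n + 1)) := by
  have hw : 0 < 1 - β := by linarith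
  have hmono := h.norm_sq_succ_le (by linarith) (by linarith) n
  have q₁ := h.gap_nonneg n (n + 1)
  have q₂ := h.gap_nonneg (n + 1) n
  have hid := h.one_step_identity (A := (1 + β) * (2 * β - 1) / (1 - β))
    (A' := (1 + β) / (1 - β)) (u := 1 / (1 - β)) (by field_simp; ring) (by field_simp) n
  rw [mul_one_div_cancel hw.ne', sub_self, zero_mul] at hid
  have hA : (1 + β) / (1 - β) = (1 + β) * (2 * β - 1) / (1 - β) + 2 * (1 + β) := by
    field_simp
    ring
  have hD : (1 + β) * (2 * β - 1) / (1 - β) ≤ 2 * n * (1 + β) := by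
    rw [div_le_iff₀ hw]
    nlinarith
  have e₁ := mul_le_mul_of_nonneg_left hmono (sub_nonneg.mpr hD)
  have e₂ : 0 ≤ 2 * (1 + β * (1 / (1 - β))) * interpolationGap φ G x n (n + 1) := by positivity
  have e₃ : 0 ≤ 2 * (β * (1 / (1 - β))) * interpolationGap φ G x (n + 1) n := by positivity
  rw [hA] at hid
  push_cast
  linarith

theorem sublinear_of_regimeGap_neg (h : IsDescentTrajectory (1 + β) φ G x) (hβ : 1 / 2 ≤ β)
    (hβ1 : β < 1) {m n : ℕ} (hmn : m < n) (hreg : ∀ j ≤ m, 0 ≤ regimeGap β j)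
    (hneg : regimeGap β (m + 1) < 0) :
    2 * n * (1 + β) * ‖G n‖ ^ 2 ≤ 2 * (φ 0 - φ n) := by
  induction n, hmn using Nat.le_induction with
  | base => exact h.first_sublinear_step hβ hβ1 m hreg hneg
  | succ n hmn ih =>
    refine h.sublinear_step (by linarith) hβ1 n ?_ ih
    refine (le_two_mul_of_regimeGap_neg hβ hβ1 m (hreg m le_rfl) hneg).trans ?_
    have : ((m + 1 : ℕ) : ℝ) ≤ n := by exact_mod_cast hmn
    have : 0 < 1 - β := by linarith
    gcongr

theorem rate (h : IsDescentTrajectory (1 + β) φ G x) (hβ : -1 < β) (hβ1 : β < 1) (n : ℕ) :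
    min (2 * n * (1 + β)) ((β ^ 2)⁻¹ ^ n - 1) * ‖G n‖ ^ 2 ≤ 2 * (φ 0 - φ n) := by
  have hleft : 2 * n * (1 + β) * ‖G n‖ ^ 2 ≤ 2 * (φ 0 - φ n) →
      min (2 * n * (1 + β)) ((β ^ 2)⁻¹ ^ n - 1) * ‖G n‖ ^ 2 ≤ 2 * (φ 0 - φ n) :=
    (mul_le_mul_of_nonneg_right (min_le_left _ _) (by positivity)).trans
  rcases le_total β (1 / 2) with hβ2 | hβ2
  · apply hleft
    linarith [h.short_step (by linarith) (by linarith) n]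
  by_cases hreg : ∀ j ≤ n, 0 ≤ regimeGap β j
  · refine (mul_le_mul_of_nonneg_right (min_le_right _ _) (by positivity)).trans ?_
    cases n with
    | zero => simp
    | succ n =>
      refine le_trans ?_ (h.long_step hβ2 hβ1 n fun j hj => hreg j (by lia))
      have hu : 0 ≤ ((β ^ 2)⁻¹ ^ (n + 1) - 1) / (1 + β) := by
        refine div_nonneg (le_trans ?_ (mul_one_sub_sq_le_inv_sq_pow (by linarith) (n + 1)))
          (by linarith)
        exact mul_nonneg (Nat.cast_nonneg _) (by nlinarith)
      have hβ0 : 0 ≤ β := by linarith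
      have q₁ := h.gap_nonneg n (n + 1)
      have q₂ := h.gap_nonneg (n + 1) n
      have hT := hreg (n + 1) le_rfl
      simp only [add_assoc]
      exact le_add_of_nonneg_right (by positivity)
  · apply hleft
    classical
    push Not at hreg
    have hex : ∃ j, regimeGap β j < 0 := hreg.imp fun _ hj => hj.2
    obtain ⟨j, hjn, hj⟩ := hreg
    have hle : Nat.find hex ≤ n := (Nat.find_min' hex hj).trans hjn
    have hspec := Nat.find_spec hex
    have hmin (k : ℕ) (hk : k < Nat.find hex) : 0 ≤ regimeGap β k :=
      not_lt.mp (Nat.find_min hex hk)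
    obtain ⟨m, hm⟩ : ∃ m, Nat.find hex = m + 1 := by
      refine Nat.exists_eq_succ_of_ne_zero fun h0 => ?_
      rw [h0, regimeGap_zero] at hspec
      exact lt_irrefl _ hspec
    rw [hm] at hle hspec hmin
    exact h.sublinear_of_regimeGap_neg hβ2 hβ1 hle (fun k hk => hmin k (by lia)) hspec

theorem of_gradient_descent [CompleteSpace E] {L : ℝ} (hL : 0 < L) {f : E → ℝ}
    (hdiff : Differentiable ℝ f) (hcvx : ConvexOn ℝ Set.univ f)
    (hsmooth : ConvexOn ℝ Set.univ (fun z => L / 2 * ‖z‖ ^ 2 - f z))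
    (hx : ∀ i, x (i + 1) = x i - γ • gradient f (x i)) :
    IsDescentTrajectory (γ * L) (fun i => f (x i) / L) (fun i => (1 / L) • gradient f (x i)) x where
  step i := by
    rw [hx, smul_smul]
    congr 2
    field_simp
  interpolation i j := by
    have h := gradient_interpolation hL hdiff hcvx hsmooth (x i) (x j)
    rw [← smul_sub, norm_smul, mul_pow, Real.norm_eq_abs, sq_abs, real_inner_smul_left,
      le_div_iff₀ hL]
    refine le_trans (le_of_eq ?_) h
    field_simp

end IsDescentTrajectory


/-- **Exact worst-case rate of gradient descent on smooth convex functions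
(Theorem 1 / `corollary:cvx_rate`).**
Let `f ∈ F_{0,L}` (convex and `L`-smooth from above), bounded below, and run `N ≥ 1`
steps of gradient descent with constant stepsize `γ`, `0 < γL < 2`, `γL ≠ 1`. Then
`(1/(2L))‖∇f(x_N)‖² ≤ (f(x₀) − f_*)/(1 + γL·min{2N, (−1+(1−γL)^{−2N})/(γL)})`. -/
theorem gd_convex_rate
    {E : Type*} [NormedAddCommGroup E] [InnerProductSpace ℝ E] [CompleteSpace E]
    (L : ℝ) (hL : 0 < L) (f : E → ℝ) (hdiff : Differentiable ℝ f)
    (hcvx : ConvexOn ℝ Set.univ f)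
    (hsmooth : ConvexOn ℝ Set.univ (fun z => L / 2 * ‖z‖ ^ 2 - f z))
    (hbdd : BddBelow (Set.range f))
    (N : ℕ) (hN : 1 ≤ N)
    (γ : ℝ) (hγ : 0 < γ) (hγL : γ * L < 2) (hγL1 : γ * L ≠ 1)
    (x : ℕ → E) (hx : ∀ i < N, x (i + 1) = x i - γ • gradient f (x i)) :
    1 / (2 * L) * ‖gradient f (x N)‖ ^ 2 ≤
      (f (x 0) - ⨅ y, f y) /
        (1 + γ * L *
          min (2 * (N : ℝ)) ((-1 + (1 - γ * L) ^ (-(2 * (N : ℤ)))) / (γ * L))) := by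
  obtain ⟨y, hy, hxy⟩ : ∃ y : ℕ → E, (∀ i, y (i + 1) = y i - γ • gradient f (y i)) ∧
      ∀ i ≤ N, y i = x i := by
    refine ⟨fun i => (fun z => z - γ • gradient f z)^[i] (x 0),
      fun i => Function.iterate_succ_apply' _ _ _, fun i => ?_⟩
    induction i with
    | zero => simp
    | succ i ih =>
      intro hi
      rw [hx i (by lia), ← ih (by lia)]
      exact Function.iterate_succ_apply' _ _ _
  rw [← hxy 0 (Nat.zero_le N), ← hxy N le_rfl]
  have hΓ : 0 < γ * L := mul_pos hγ hL
  have htraj := IsDescentTrajectory.of_gradient_descent hL hdiff hcvx hsmooth hy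
  obtain ⟨β, hβ⟩ : ∃ β, γ * L = 1 + β := ⟨γ * L - 1, by ring⟩
  rw [hβ] at htraj hΓ hγL hγL1 ⊢
  have hrate := htraj.rate (by linarith) (by linarith) N
  have hinf := iInf_add_norm_gradient_sq_le hL hdiff hsmooth hbdd (y N)
  have hpow : (1 - (1 + β)) ^ (-(2 * (N : ℤ))) = (β ^ 2)⁻¹ ^ N := by
    rw [zpow_neg, zpow_mul, zpow_natCast, sub_add_cancel_left, inv_pow]
    norm_cast
    rw [neg_sq]
  have hβ0 : 0 < β ^ 2 := by
    have : β ≠ 0 := fun h => hγL1 (by rw [h, add_zero])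
    positivity
  have hden : 1 + (1 + β) * min (2 * (N : ℝ)) ((-1 + (β ^ 2)⁻¹ ^ N) / (1 + β))
      = 1 + min (2 * N * (1 + β)) ((β ^ 2)⁻¹ ^ N - 1) := by
    rw [mul_min_of_nonneg _ _ hΓ.le, mul_div_cancel₀ _ hΓ.ne', mul_comm (1 + β),
      neg_add_eq_sub]
  have hpos : 0 < 1 + min (2 * N * (1 + β)) ((β ^ 2)⁻¹ ^ N - 1) := by
    rw [← min_add_add_left]
    exact lt_min (by positivity) (by rw [add_sub_cancel]; positivity)
  rw [hpow, hden, le_div_iff₀ hpos]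
  rw [norm_smul, mul_pow, Real.norm_eq_abs, sq_abs, ← sub_div] at hrate
  have hscaled := mul_le_mul_of_nonneg_left hrate (by positivity : 0 ≤ L / 2)
  have e₁ : L / 2 * (2 * ((f (y 0) - f (y N)) / L)) = f (y 0) - f (y N) := by field_simp
  have e₂ : L / 2 * (min (2 * N * (1 + β)) ((β ^ 2)⁻¹ ^ N - 1)
      * ((1 / L) ^ 2 * ‖gradient f (y N)‖ ^ 2))
      = 1 / (2 * L) * ‖gradient f (y N)‖ ^ 2
        * min (2 * N * (1 + β)) ((β ^ 2)⁻¹ ^ N - 1) := by field_simp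
  rw [e₁, e₂] at hscaled
  linarith
end

section
/- Let 0 < μ < L and let f : E → ℝ be a differentiable function on a real inner product space E with f ∈ F_{μ,L}, and let f_* := inf_x f(x) (finite by strong convexity). Fix an integer N ≥ 1 and a stepsize γ > 0 with γL ∈ (0,2), γL ≠ 1 and γμ ≠ 1, and let x_{i+1} = x_i − γ∇f(x_i) for i = 0,…,N−1. Then (1/(2L))·‖∇f(x_N)‖² ≤ (f(x_0) − f_*) / ( 1 + γL · min{ (−1 + (1−γμ)^{−2N})/(γμ) , (−1 + (1−γL)^{−2N})/(γL) } ). -/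
/-- The sum `∑ j = 1..N, (1 + t) t⁻²ʲ`, which equals `(t⁻²ᴺ - 1) / (1 - t)` for `t ≠ 1`. -/
noncomputable def geomRate (t : ℝ) (N : ℕ) : ℝ :=
  ∑ j ∈ Finset.range N, (1 + t) * (t ^ 2)⁻¹ ^ (j + 1)

namespace geomRate

variable {t c d : ℝ} {N : ℕ}

@[simp] lemma zero (t : ℝ) : geomRate t 0 = 0 := by simp [geomRate]

lemma succ (t : ℝ) (N : ℕ) :
    geomRate t (N + 1) = geomRate t N + (1 + t) * (t ^ 2)⁻¹ ^ (N + 1) := by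
  simp [geomRate, Finset.sum_range_succ]

lemma one_sub_mul (ht : t ≠ 0) (N : ℕ) : (1 - t) * geomRate t N = (t ^ 2)⁻¹ ^ N - 1 := by
  induction N with
  | zero => simp
  | succ n ih =>
    have h : t ^ 2 * (t ^ 2)⁻¹ = 1 := mul_inv_cancel₀ (pow_ne_zero 2 ht)
    rw [succ, pow_succ]
    linear_combination ih - (t ^ 2)⁻¹ ^ n * h

lemma sq_mul_succ (ht : t ≠ 0) (N : ℕ) :
    t ^ 2 * geomRate t (N + 1) = geomRate t N + 1 + t := by
  have h : t ^ 2 * (t ^ 2)⁻¹ = 1 := mul_inv_cancel₀ (pow_ne_zero 2 ht)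
  rw [succ, pow_succ]
  linear_combination (1 + t) * (t ^ 2)⁻¹ ^ N * h - (1 + t) * one_sub_mul ht N

lemma nonneg (ht : -1 ≤ t) (N : ℕ) : 0 ≤ geomRate t N :=
  Finset.sum_nonneg fun _ _ => mul_nonneg (by linarith) (by positivity)

lemma pos (ht : -1 < t) (h0 : t ≠ 0) (hN : 1 ≤ N) : 0 < geomRate t N :=
  Finset.sum_pos (fun _ _ => mul_pos (by linarith) (by positivity))
    (Finset.nonempty_range_iff.2 (by omega))

lemma eq_div (ht : t ≠ 0) (ht1 : t ≠ 1) (N : ℕ) :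
    geomRate t N = (-1 + t ^ (-(2 * (N : ℤ)))) / (1 - t) := by
  rw [eq_div_iff (sub_ne_zero.2 ht1.symm), mul_comm, one_sub_mul ht, zpow_neg, zpow_mul,
    zpow_natCast, inv_pow, zpow_ofNat]
  ring

lemma continuousOn (N : ℕ) : ContinuousOn (fun t => geomRate t N) {0}ᶜ := by
  unfold geomRate
  refine continuousOn_finsetSum _ fun j _ => ?_
  refine ContinuousOn.mul (by fun_prop) (ContinuousOn.pow (ContinuousOn.inv₀ (by fun_prop) ?_) _)
  intro t ht
  exact pow_ne_zero 2 ht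

lemma inv_sq_le (hc : 0 < c) (hcd : c ≤ d) : (d ^ 2)⁻¹ ≤ (c ^ 2)⁻¹ :=
  inv_anti₀ (by positivity) (by gcongr)

/-- Comparison of the two rates when already the first terms are ordered. -/
lemma le_neg_of_le (hc : 0 < c) (hc1 : c < 1) (h : c ≤ d * (1 - c)) (N : ℕ) :
    geomRate d N ≤ geomRate (-c) N := by
  have hd : 0 < d := by
    by_contra! hd
    nlinarith
  have hcd : c ≤ d := by nlinarith
  refine Finset.sum_le_sum fun j _ => ?_
  have h1 : (1 + d) * (d ^ 2)⁻¹ ≤ (1 - c) * (c ^ 2)⁻¹ := by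
    rw [← div_eq_mul_inv, ← div_eq_mul_inv, div_le_div_iff₀ (by positivity) (by positivity)]
    nlinarith [mul_le_mul_of_nonneg_left h hc.le, mul_le_mul_of_nonneg_left h hd.le]
  have h2 : (d ^ 2)⁻¹ ^ j ≤ (c ^ 2)⁻¹ ^ j := pow_le_pow_left₀ (by positivity) (inv_sq_le hc hcd) _
  have h3 : 0 ≤ (1 - c) * (c ^ 2)⁻¹ := mul_nonneg (by linarith) (by positivity)
  rw [neg_sq, pow_succ' (d ^ 2)⁻¹, pow_succ' (c ^ 2)⁻¹, ← mul_assoc, ← mul_assoc,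
    ← sub_eq_add_neg]
  exact mul_le_mul h1 h2 (by positivity) h3

lemma neg_lt (hd : 0 < d) (hdc : d ≤ c) (hN : 1 ≤ N) :
    geomRate (-c) N < geomRate d N := by
  refine Finset.sum_lt_sum_of_nonempty (Finset.nonempty_range_iff.2 (by omega)) fun j _ => ?_
  have h2 : (c ^ 2)⁻¹ ^ (j + 1) ≤ (d ^ 2)⁻¹ ^ (j + 1) :=
    pow_le_pow_left₀ (by positivity) (inv_sq_le hd hdc) _
  have h3 : 0 < (c ^ 2)⁻¹ ^ (j + 1) := by
    have : 0 < c := by linarith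
    positivity
  rw [neg_sq]
  nlinarith

lemma mul_le_mul_neg (hc : 0 < c) (hc1 : c < 1) (hcd : c ≤ d) (N : ℕ) :
    (1 - c) * geomRate d N ≤ (1 + d) * geomRate (-c) N := by
  simp only [geomRate, Finset.mul_sum]
  refine Finset.sum_le_sum fun j _ => ?_
  have h2 : (d ^ 2)⁻¹ ^ (j + 1) ≤ (c ^ 2)⁻¹ ^ (j + 1) :=
    pow_le_pow_left₀ (by positivity) (inv_sq_le hc hcd) _
  have h3 : 0 ≤ (1 - c) * (1 + d) := mul_nonneg (by linarith) (by linarith)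
  rw [neg_sq]
  linarith [mul_le_mul_of_nonneg_left h2 h3]

/-- If the two rates agree at `N`, then they are ordered at all earlier indices. -/
lemma neg_le_of_eq (hc : 0 < c) (hc1 : c < 1) (hcd : c ≤ d)
    (h : geomRate d N = geomRate (-c) N) {k : ℕ} (hk : k ≤ N) :
    geomRate (-c) k ≤ geomRate d k := by
  by_contra! hlt
  obtain ⟨j, hjk, hj⟩ := Finset.exists_lt_of_sum_lt hlt
  have hq : (d ^ 2)⁻¹ ≤ ((-c) ^ 2)⁻¹ := by rw [neg_sq]; exact inv_sq_le hc hcd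
  have hterm : ∀ i ≥ j, (1 + d) * (d ^ 2)⁻¹ ^ (i + 1) ≤ (1 + -c) * ((-c) ^ 2)⁻¹ ^ (i + 1) := by
    intro i hi
    induction i, hi using Nat.le_induction with
    | base => exact hj.le
    | succ n _ ih =>
      rw [pow_succ _ (n + 1), pow_succ _ (n + 1), ← mul_assoc, ← mul_assoc]
      exact mul_le_mul ih hq (by positivity) (mul_nonneg (by linarith) (by positivity))
  rw [Finset.mem_range] at hjk
  have hall : ∀ n ≥ k, geomRate d n < geomRate (-c) n := by
    intro n hn
    induction n, hn using Nat.le_induction with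
    | base => exact hlt
    | succ n hn ih =>
      rw [succ, succ]
      linarith [hterm n (by omega)]
  exact (hall N hk).ne h

lemma exists_neg_eq (hd : 0 < d) (hc : 0 < c) (hc1 : c < 1) (hN : 1 ≤ N)
    (h : geomRate d N ≤ geomRate (-c) N) :
    ∃ c' ≥ c, c' < 1 ∧ geomRate d N = geomRate (-c') N := by
  have hcont : ContinuousOn (fun t => geomRate (-t) N) (Set.Icc c 1) :=
    (continuousOn N).comp (by fun_prop) fun t ht => by
      have := ht.1
      simp only [Set.mem_compl_iff, Set.mem_singleton_iff, neg_eq_zero]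
      linarith
  have hpos := pos (by linarith) hd.ne' hN
  obtain ⟨c', ⟨h1, h2⟩, h3⟩ := intermediate_value_Icc' hc1.le hcont
    (show geomRate d N ∈ _ from ⟨by simpa [geomRate] using hpos.le, h⟩)
  refine ⟨c', h1, lt_of_le_of_ne h2 ?_, h3.symm⟩
  rintro rfl
  simp [geomRate] at h3 hpos
  linarith

lemma exists_eq_neg (hd : 0 < d) (hc : 0 < c) (hc1 : c < 1)
    (h : geomRate (-c) N ≤ geomRate d N) :
    ∃ d' ≥ d, geomRate d' N = geomRate (-c) N := by
  have hcont : ContinuousOn (fun t => geomRate t N) (Set.Icc d (max d (c / (1 - c)))) :=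
    (continuousOn N).mono fun t ht => by
      have := ht.1
      simp only [Set.mem_compl_iff, Set.mem_singleton_iff]
      linarith
  have hle : c ≤ max d (c / (1 - c)) * (1 - c) := by
    rw [← div_le_iff₀ (by linarith)]
    exact le_max_right _ _
  obtain ⟨d', ⟨h1, -⟩, h3⟩ := intermediate_value_Icc' (le_max_left _ _) hcont
    (show geomRate (-c) N ∈ _ from ⟨le_neg_of_le hc hc1 hle N, h⟩)
  exact ⟨d', h1, h3⟩

end geomRate

/-- The weighted sum of four interpolation inequalities between three consecutive iterates which
propagates the potential of gradient descent. -/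
lemma potential_step {c d A B F₀ Fi Fj Fk p00 p01 p02 p11 p12 p22 : ℝ}
    (hα : 0 ≤ A * (d ^ 2 - d - d ^ 3 + c * d) + B * (c * d + d + c ^ 2 + c ^ 2 * d)
      + (1 + d) * (c + d))
    (hβ : 0 ≤ A * (d ^ 2 * (1 - c) - c * (1 - d)) + B * c * (1 + d + c + c ^ 2)
      - (1 - c) * (c + d))
    (hρ : 0 ≤ d * (A - B)) (hσ : 0 ≤ c * (A - B))
    (h01 : 0 ≤ 2 * (c + d) * (Fi - Fj - p01) -
      ((p00 - 2 * p01 + p11) + (1 - d) * (1 + c) * p00 - 2 * (1 - d) * (p00 - p01)))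
    (h10 : 0 ≤ 2 * (c + d) * (Fj - Fi + p00) -
      ((p00 - 2 * p01 + p11) + (1 - d) * (1 + c) * p00 - 2 * (1 - d) * (p00 - p01)))
    (h02 : 0 ≤ 2 * (c + d) * (Fi - Fk - (p02 + p12)) -
      ((p00 - 2 * p02 + p22) + (1 - d) * (1 + c) * (p00 + 2 * p01 + p11)
        - 2 * (1 - d) * (p00 + p01 - p02 - p12)))
    (h20 : 0 ≤ 2 * (c + d) * (Fk - Fi + (p00 + p01)) -
      ((p00 - 2 * p02 + p22) + (1 - d) * (1 + c) * (p00 + 2 * p01 + p11)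
        - 2 * (1 - d) * (p00 + p01 - p02 - p12)))
    {A' B' : ℝ} (hA : d ^ 2 * A = A' + 1 + d) (hB : c ^ 2 * B = B' + 1 - c)
    (hc : 0 ≤ c + d)
    (hJ : 4 * (c + d) * (Fi - F₀) + 2 * (d - c) * (A' - B') * (Fj - Fi)
      + (2 * (c + d) * A' - (A' - B') * (c + d + c * d)) * p00
      + (A' - B') * (2 * p01 + p11) ≤ 0) :
    (c + d) * (4 * (c + d) * (Fj - F₀) + 2 * (d - c) * (A - B) * (Fk - Fj)
      + (2 * (c + d) * A - (A - B) * (c + d + c * d)) * p11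
      + (A - B) * (2 * p12 + p22)) ≤ 0 := by
  obtain rfl : A' = d ^ 2 * A - 1 - d := by linarith
  obtain rfl : B' = c ^ 2 * B - 1 + c := by linarith
  linear_combination (c + d) * hJ + mul_nonneg hα h01 + mul_nonneg hβ h10 + mul_nonneg hρ h02
    + mul_nonneg hσ h20

section QuadraticBounds

variable {E : Type*} [NormedAddCommGroup E] [InnerProductSpace ℝ E]

open scoped RealInnerProductSpace

/-- `F` lies above the paraboloids of curvature `a` tangent along `G`. -/
def QuadraticLowerBound (a : ℝ) (F : E → ℝ) (G : E → E) : Prop :=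
  ∀ x y, F y + ⟪G y, x - y⟫ + a / 2 * ‖x - y‖ ^ 2 ≤ F x

/-- `F` lies below the paraboloids of curvature `b` tangent along `G`. -/
def QuadraticUpperBound (b : ℝ) (F : E → ℝ) (G : E → E) : Prop :=
  ∀ x y, F x ≤ F y + ⟪G y, x - y⟫ + b / 2 * ‖x - y‖ ^ 2

lemma QuadraticLowerBound.mono {a a' : ℝ} {F : E → ℝ} {G : E → E}
    (h : QuadraticLowerBound a F G) (ha : a' ≤ a) : QuadraticLowerBound a' F G := fun x y => by
  nlinarith [h x y, sq_nonneg ‖x - y‖]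

lemma QuadraticUpperBound.mono {b b' : ℝ} {F : E → ℝ} {G : E → E}
    (h : QuadraticUpperBound b F G) (hb : b ≤ b') : QuadraticUpperBound b' F G := fun x y => by
  nlinarith [h x y, sq_nonneg ‖x - y‖]

lemma QuadraticLowerBound.smul {a γ : ℝ} {F : E → ℝ} {G : E → E}
    (h : QuadraticLowerBound a F G) (hγ : 0 ≤ γ) :
    QuadraticLowerBound (γ * a) (fun x => γ * F x) (fun x => γ • G x) := fun x y => by
  have := mul_le_mul_of_nonneg_left (h x y) hγ
  simp only [real_inner_smul_left]
  linarith

lemma QuadraticUpperBound.smul {b γ : ℝ} {F : E → ℝ} {G : E → E}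
    (h : QuadraticUpperBound b F G) (hγ : 0 ≤ γ) :
    QuadraticUpperBound (γ * b) (fun x => γ * F x) (fun x => γ • G x) := fun x y => by
  have := mul_le_mul_of_nonneg_left (h x y) hγ
  simp only [real_inner_smul_left]
  linarith

lemma ConvexOn.add_fderiv_le {h : E → ℝ} (hh : ConvexOn ℝ Set.univ h) {h' : E →L[ℝ] ℝ} {y : E}
    (hd : HasFDerivAt h h' y) (x : E) : h y + h' (x - y) ≤ h x := by
  have hc : ConvexOn ℝ Set.univ (h ∘ AffineMap.lineMap (k := ℝ) y x) := by
    simpa using hh.comp_affineMap (AffineMap.lineMap (k := ℝ) y x)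
  have hd' : HasDerivAt (h ∘ AffineMap.lineMap (k := ℝ) y x) (h' (x - y)) 0 :=
    HasFDerivAt.comp_hasDerivAt (0 : ℝ) (by simpa using hd) AffineMap.hasDerivAt_lineMap
  have := hc.le_slope_of_hasDerivAt (Set.mem_univ 0) (Set.mem_univ 1) zero_lt_one hd'
  rw [slope_def_field] at this
  simp only [Function.comp_apply, AffineMap.lineMap_apply_one, AffineMap.lineMap_apply_zero] at this
  linarith

/-- The interpolation inequality for functions with curvature in `[a, b]`. -/
lemma interpolation_ineq {a b : ℝ} {F : E → ℝ} {G : E → E} (hab : a < b)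
    (hl : QuadraticLowerBound a F G) (hu : QuadraticUpperBound b F G) (x y : E) :
    0 ≤ 2 * (b - a) * (F x - F y - ⟪G y, x - y⟫) -
      (‖G x - G y‖ ^ 2 + a * b * ‖x - y‖ ^ 2 - 2 * a * ⟪G x - G y, x - y⟫) := by
  have hK : 0 < b - a := sub_pos.2 hab
  set u := G x - G y - a • (x - y) with hu'
  set v := (b - a)⁻¹ • u with hv
  have h1 := hl (x - v) y
  have h2 := hu (x - v) x
  have e1 : x - v - y = (x - y) - v := by abel
  have e2 : x - v - x = -v := by abel
  rw [e1, inner_sub_right, norm_sub_sq_real] at h1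
  rw [e2, inner_neg_right, norm_neg] at h2
  have e3 : ⟪G x, v⟫ - ⟪G y, v⟫ - a * ⟪x - y, v⟫ = (b - a) * ‖v‖ ^ 2 := by
    rw [← inner_sub_left, ← real_inner_smul_left, ← inner_sub_left, ← hu',
      show u = (b - a) • v by rw [hv, smul_inv_smul₀ hK.ne'], real_inner_smul_left,
      real_inner_self_eq_norm_sq]
  have e4 : (b - a) ^ 2 * ‖v‖ ^ 2 =
      ‖G x - G y‖ ^ 2 - 2 * a * ⟪G x - G y, x - y⟫ + a ^ 2 * ‖x - y‖ ^ 2 := by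
    have : ‖u‖ ^ 2 = (b - a) ^ 2 * ‖v‖ ^ 2 := by
      rw [show u = (b - a) • v by rw [hv, smul_inv_smul₀ hK.ne'], norm_smul, mul_pow,
        Real.norm_eq_abs, sq_abs]
    rw [← this, hu', norm_sub_sq_real, real_inner_smul_right, norm_smul, mul_pow,
        Real.norm_eq_abs, sq_abs]
    ring
  have h3 : 0 ≤ F x - F y - ⟪G y, x - y⟫ - a / 2 * ‖x - y‖ ^ 2 - (b - a) / 2 * ‖v‖ ^ 2 := by
    linarith
  have h4 := mul_nonneg (mul_nonneg zero_le_two hK.le) h3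
  linarith

/-- Gradient descent with unit stepsize, when the rates of the two extremal curvatures agree. -/
lemma descent_of_geomRate_eq {F : E → ℝ} {G : E → E} {c d : ℝ} {N : ℕ} (hN : 1 ≤ N)
    (hc : 0 < c) (hc1 : c < 1) (hd : 0 < d) (h : geomRate d N = geomRate (-c) N)
    (hl : QuadraticLowerBound (1 - d) F G) (hu : QuadraticUpperBound (1 + c) F G)
    {x : ℕ → E} (hx : ∀ i, x (i + 1) = x i - G (x i)) :
    geomRate d N * ‖G (x N)‖ ^ 2 ≤ 2 * (F (x 0) - F (x N)) := by
  have hcd : c ≤ d := by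
    by_contra! hdc
    exact (geomRate.neg_lt hd hdc.le hN).ne' h
  have hK : 0 < c + d := by linarith
  have hQ := interpolation_ineq (by linarith) hl hu
  have key : ∀ i ≤ N, 4 * (c + d) * (F (x i) - F (x 0))
      + 2 * (d - c) * (geomRate d i - geomRate (-c) i) * (F (x (i + 1)) - F (x i))
      + (2 * (c + d) * geomRate d i - (geomRate d i - geomRate (-c) i) * (c + d + c * d))
        * ‖G (x i)‖ ^ 2
      + (geomRate d i - geomRate (-c) i)
        * (2 * ⟪G (x i), G (x (i + 1))⟫ + ‖G (x (i + 1))‖ ^ 2) ≤ 0 := by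
    intro i
    induction i with
    | zero => simp
    | succ i ih =>
      intro hi
      have hJ := ih (by omega)
      have hle := geomRate.neg_le_of_eq hc hc1 hcd h hi
      have hA := geomRate.sq_mul_succ hd.ne' i
      have hB := geomRate.sq_mul_succ (neg_ne_zero.2 hc.ne') i
      have hA0 := geomRate.nonneg (by linarith : -1 ≤ d) i
      have hB1 := geomRate.nonneg (by linarith : -1 ≤ -c) (i + 1)
      have hcdi := geomRate.mul_le_mul_neg hc hc1 hcd i
      have hpA := geomRate.one_sub_mul hd.ne' (i + 1)
      have hpB := geomRate.one_sub_mul (neg_ne_zero.2 hc.ne') (i + 1)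
      have hpd : 0 < (d ^ 2)⁻¹ ^ (i + 1) := by positivity
      have hpq : (d ^ 2)⁻¹ ^ (i + 1) ≤ ((-c) ^ 2)⁻¹ ^ (i + 1) :=
        pow_le_pow_left₀ (by positivity) (by rw [neg_sq]; exact geomRate.inv_sq_le hc hcd) _
      rw [neg_sq] at hB
      have e1 : x i - x (i + 1) = G (x i) := by rw [hx]; abel
      have e2 : x (i + 1) - x i = -G (x i) := by rw [hx]; abel
      have e3 : x i - x (i + 1 + 1) = G (x i) + G (x (i + 1)) := by rw [hx (i + 1), hx i]; abel
      have e4 : x (i + 1 + 1) - x i = -(G (x i) + G (x (i + 1))) := by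
        rw [hx (i + 1), hx i]; abel
      have h01 := hQ (x i) (x (i + 1))
      have h10 := hQ (x (i + 1)) (x i)
      have h02 := hQ (x i) (x (i + 1 + 1))
      have h20 := hQ (x (i + 1 + 1)) (x i)
      rw [e1] at h01
      rw [e2] at h10
      rw [e3] at h02
      rw [e4] at h20
      generalize geomRate d (i + 1) = A at *
      generalize geomRate (-c) (i + 1) = B at *
      generalize geomRate d i = A' at *
      generalize geomRate (-c) i = B' at *
      generalize G (x i) = g₀ at *
      generalize G (x (i + 1)) = g₁ at *
      generalize G (x (i + 1 + 1)) = g₂ at *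
      simp only [norm_sub_sq_real, norm_add_sq_real, norm_neg, inner_neg_right, inner_sub_left,
        inner_add_right, real_inner_self_eq_norm_sq, real_inner_comm g₀ g₁, real_inner_comm g₀ g₂,
        real_inner_comm g₁ g₂] at h01 h10 h02 h20
      have hA1 : (d - 1) * A ≤ 1 := by linarith
      have hAB : (1 - d) * A ≤ (1 + c) * B := by linarith
      have hABd : d ^ 2 * (1 - c) * A ≤ c ^ 2 * (1 + d) * B := by
        linear_combination hcdi + (1 - c) * hA - (1 + d) * hB
      have hA2 : 1 + d ≤ d ^ 2 * A := by linarith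
      refine nonpos_of_mul_nonpos_right (potential_step (c := c) (d := d) (A' := A') (B' := B')
        (p00 := ‖g₀‖ ^ 2) (p01 := ⟪g₀, g₁⟫) (p02 := ⟪g₀, g₂⟫) (p11 := ‖g₁‖ ^ 2)
        (p12 := ⟪g₁, g₂⟫) (p22 := ‖g₂‖ ^ 2) (Fi := F (x i)) ?_ ?_
        (mul_nonneg hd.le (sub_nonneg.2 hle)) (mul_nonneg hc.le (sub_nonneg.2 hle))
        (by linarith) (by linarith) (by linarith) (by linarith)
        (by linarith) (by linarith) hK.le (by linarith)) hK
      · have hABd' : d * (1 - c) * A ≤ c * (1 + d) * B := by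
          refine le_of_mul_le_mul_left ?_ hd
          linarith [mul_nonneg (mul_nonneg hc.le (sub_nonneg.2 hcd))
            (mul_nonneg (by linarith : (0 : ℝ) ≤ 1 + d) hB1)]
        linarith [mul_le_mul_of_nonneg_left hA1 (sq_nonneg d), mul_nonneg hB1 (sub_nonneg.2 hcd),
          mul_nonneg hB1 (sq_nonneg c), mul_nonneg (mul_nonneg hB1 (sq_nonneg c)) hd.le,
          mul_pos hc hd]
      · linarith [mul_le_mul_of_nonneg_left hAB hc.le,
          mul_le_mul_of_nonneg_left hA2 (by linarith : 0 ≤ 1 - c),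
          mul_nonneg (mul_nonneg hc.le hd.le) hB1, mul_nonneg (pow_nonneg hc.le 3) hB1,
          sq_nonneg (1 - c)]
  have hfin := key N le_rfl
  rw [h, sub_self] at hfin
  rw [h]
  have : (c + d) * (geomRate (-c) N * ‖G (x N)‖ ^ 2 - 2 * (F (x 0) - F (x N))) ≤ 0 := by
    linarith
  linarith [nonpos_of_mul_nonpos_right this hK]

/-- Gradient descent with unit stepsize on functions with curvature in `[a, b]`. -/
lemma descent_min_geomRate {F : E → ℝ} {G : E → E} {a b : ℝ} {N : ℕ} (hN : 1 ≤ N)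
    (hab : a < b) (hb2 : b < 2) (ha1 : a ≠ 1) (hb1 : b ≠ 1)
    (hl : QuadraticLowerBound a F G) (hu : QuadraticUpperBound b F G)
    {x : ℕ → E} (hx : ∀ i, x (i + 1) = x i - G (x i)) :
    min (geomRate (1 - a) N) (geomRate (1 - b) N) * ‖G (x N)‖ ^ 2 ≤ 2 * (F (x 0) - F (x N)) := by
  rcases lt_or_gt_of_ne ha1 with ha | ha
  · have hd : 0 < 1 - a := by linarith
    have of_rate_le : ∀ c, 0 < c → c < 1 → b ≤ 1 + c →
        geomRate (1 - a) N ≤ geomRate (-c) N →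
        geomRate (1 - a) N * ‖G (x N)‖ ^ 2 ≤ 2 * (F (x 0) - F (x N)) := by
      intro c hc hc1 hbc hle
      obtain ⟨c', hcc, hc1', h⟩ := geomRate.exists_neg_eq hd hc hc1 hN hle
      exact descent_of_geomRate_eq hN (by linarith) hc1' hd h (hl.mono (by linarith))
        (hu.mono (by linarith)) hx
    rcases lt_or_gt_of_ne hb1 with hb | hb
    · refine le_trans (mul_le_mul_of_nonneg_right (min_le_left _ _) (sq_nonneg _)) ?_
      have hc : (1 - a) / (1 + (1 - a)) * (1 + (1 - a)) = 1 - a :=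
        div_mul_cancel₀ _ (by linarith)
      have hc0 : 0 < (1 - a) / (1 + (1 - a)) := div_pos hd (by linarith)
      have hc1 : (1 - a) / (1 + (1 - a)) < 1 := (div_lt_one (by linarith)).2 (by linarith)
      exact of_rate_le _ hc0 hc1 (by linarith)
        (geomRate.le_neg_of_le hc0 hc1 (by linarith) N)
    · have hcb : 1 - b = -(b - 1) := by ring
      rcases le_total (geomRate (1 - a) N) (geomRate (1 - b) N) with h | h
      · rw [min_eq_left h]
        exact of_rate_le (b - 1) (by linarith) (by linarith) (by linarith) (hcb ▸ h)
      · rw [min_eq_right h, hcb]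
        rw [hcb] at h
        obtain ⟨d, hdd, h⟩ := geomRate.exists_eq_neg hd (by linarith) (by linarith) h
        rw [← h]
        exact descent_of_geomRate_eq hN (by linarith) (by linarith) (by linarith) h
          (hl.mono (by linarith)) (hu.mono (by linarith)) hx
  · refine le_trans (mul_le_mul_of_nonneg_right (min_le_right _ _) (sq_nonneg _)) ?_
    have hc : 0 < b - 1 := by linarith
    obtain ⟨d, hdd, h⟩ := geomRate.exists_eq_neg hc hc (by linarith)
      (geomRate.neg_lt hc le_rfl hN).le
    rw [show 1 - b = -(b - 1) by ring, ← h]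
    exact descent_of_geomRate_eq hN hc (by linarith) (by linarith) h
      (hl.mono (by linarith)) (hu.mono (by linarith)) hx

lemma QuadraticLowerBound.bddBelow {a : ℝ} {F : E → ℝ} {G : E → E}
    (h : QuadraticLowerBound a F G) (ha : 0 < a) : BddBelow (Set.range F) := by
  refine ⟨F 0 - ‖G 0‖ ^ 2 / (2 * a), ?_⟩
  rintro _ ⟨x, rfl⟩
  have h1 := h x 0
  have h2 := neg_le_of_abs_le (abs_real_inner_le_norm (G 0) (x - 0))
  have h3 : ‖G 0‖ * ‖x - 0‖ ≤ ‖G 0‖ ^ 2 / (2 * a) + a / 2 * ‖x - 0‖ ^ 2 := by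
    rw [div_add' _ _ _ (by positivity), le_div_iff₀ (by positivity)]
    nlinarith [sq_nonneg (‖G 0‖ - a * ‖x - 0‖)]
  linarith

lemma QuadraticUpperBound.iInf_le {b : ℝ} {F : E → ℝ} {G : E → E}
    (h : QuadraticUpperBound b F G) (hb : 0 < b) (hF : BddBelow (Set.range F)) (x : E) :
    ⨅ y, F y ≤ F x - 1 / (2 * b) * ‖G x‖ ^ 2 := by
  refine (ciInf_le hF (x - b⁻¹ • G x)).trans ((h _ x).trans_eq ?_)
  rw [sub_sub_cancel_left, inner_neg_right, real_inner_smul_right, real_inner_self_eq_norm_sq,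
    norm_neg, norm_smul, mul_pow, Real.norm_eq_abs, sq_abs]
  field_simp
  ring

variable [CompleteSpace E]

lemma quadraticLowerBound_of_convexOn {f : E → ℝ} {G : E → E} {a : ℝ}
    (hf : ∀ y, HasGradientAt f (G y) y)
    (h : ConvexOn ℝ Set.univ (fun z => f z - a / 2 * ‖z‖ ^ 2)) :
    QuadraticLowerBound a f G := fun x y => by
  have hg : HasFDerivAt f (innerSL ℝ (G y)) y := (hf y).hasFDerivAt
  have hd := hg.sub ((hasStrictFDerivAt_norm_sq y).hasFDerivAt.const_mul (a / 2))
  have := h.add_fderiv_le hd x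
  simp [inner_sub_right] at this
  rw [norm_sub_sq_real, inner_sub_right, real_inner_comm y x]
  linarith

lemma quadraticUpperBound_of_convexOn {f : E → ℝ} {G : E → E} {b : ℝ}
    (hf : ∀ y, HasGradientAt f (G y) y)
    (h : ConvexOn ℝ Set.univ (fun z => b / 2 * ‖z‖ ^ 2 - f z)) :
    QuadraticUpperBound b f G := fun x y => by
  have hg : HasFDerivAt f (innerSL ℝ (G y)) y := (hf y).hasFDerivAt
  have hd := ((hasStrictFDerivAt_norm_sq y).hasFDerivAt.const_mul (b / 2)).sub hg
  have := h.add_fderiv_le hd x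
  simp [inner_sub_right] at this
  rw [norm_sub_sq_real, inner_sub_right, real_inner_comm y x]
  linarith

end QuadraticBounds

/-- **Exact worst-case rate of gradient descent on smooth strongly convex functions
(Theorem 2 / `thm:strg_cvx_rate`).**
Let `0 < μ < L`, `f ∈ F_{μ,L}`, and run `N ≥ 1` steps of gradient descent with
constant stepsize `γ`, `0 < γL < 2`, `γL ≠ 1`, `γμ ≠ 1`. Then
`(1/(2L))‖∇f(x_N)‖² ≤ (f(x₀) − f_*) /
  (1 + γL·min{(−1+(1−γμ)^{−2N})/(γμ), (−1+(1−γL)^{−2N})/(γL)})`. -/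
theorem gd_strongly_convex_rate
    {E : Type*} [NormedAddCommGroup E] [InnerProductSpace ℝ E] [CompleteSpace E]
    (L μ : ℝ) (hL : 0 < μ) (hμL : μ < L)
    (f : E → ℝ) (hdiff : Differentiable ℝ f)
    (hsmooth : ConvexOn ℝ Set.univ (fun z => L / 2 * ‖z‖ ^ 2 - f z))
    (hcurv : ConvexOn ℝ Set.univ (fun z => f z - μ / 2 * ‖z‖ ^ 2))
    (N : ℕ) (hN : 1 ≤ N)
    (γ : ℝ) (hγ : 0 < γ) (hγL : γ * L < 2) (hγL1 : γ * L ≠ 1) (hγμ1 : γ * μ ≠ 1)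
    (x : ℕ → E) (hx : ∀ i < N, x (i + 1) = x i - γ • gradient f (x i)) :
    1 / (2 * L) * ‖gradient f (x N)‖ ^ 2 ≤
      (f (x 0) - ⨅ y, f y) /
        (1 + γ * L *
          min ((-1 + (1 - γ * μ) ^ (-(2 * (N : ℤ)))) / (γ * μ))
              ((-1 + (1 - γ * L) ^ (-(2 * (N : ℤ)))) / (γ * L))) := by
  have hγμ : 0 < γ * μ := mul_pos hγ hL
  have hL0 : 0 < L := hL.trans hμL
  have hgrad : ∀ y, HasGradientAt f (gradient f y) y := fun y => (hdiff y).hasGradientAt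
  have hl := quadraticLowerBound_of_convexOn hgrad hcurv
  have hu := quadraticUpperBound_of_convexOn hgrad hsmooth
  set X : ℕ → E := fun i => (fun z => z - γ • gradient f z)^[i] (x 0) with hX
  have hXs : ∀ i, X (i + 1) = X i - γ • gradient f (X i) := fun i =>
    Function.iterate_succ_apply' _ _ _
  have hxX : ∀ i ≤ N, x i = X i := by
    intro i
    induction i with
    | zero => intro _; rfl
    | succ i ih => intro hi; rw [hx i (by omega), hXs, ih (by omega)]
  have hdesc := descent_min_geomRate hN (mul_lt_mul_of_pos_left hμL hγ) hγL hγμ1 hγL1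
    (hl.smul hγ.le) (hu.smul hγ.le) hXs
  rw [← hxX N le_rfl, ← hxX 0 (Nat.zero_le N), norm_smul, mul_pow, Real.norm_eq_abs,
    sq_abs] at hdesc
  have hinf := hu.iInf_le hL0 (hl.bddBelow hL) (x N)
  have hmin : 0 ≤ min (geomRate (1 - γ * μ) N) (geomRate (1 - γ * L) N) :=
    le_min (geomRate.nonneg (by nlinarith) N) (geomRate.nonneg (by linarith) N)
  have hsimp : ∀ s, 0 < s → s ≠ 1 →
      (-1 + (1 - s) ^ (-(2 * (N : ℤ)))) / s = geomRate (1 - s) N := fun s hs hs1 => by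
    rw [geomRate.eq_div (sub_ne_zero.2 hs1.symm) (by linarith), sub_sub_cancel]
  rw [hsimp _ hγμ hγμ1, hsimp _ (by positivity) hγL1]
  generalize min (geomRate (1 - γ * μ) N) (geomRate (1 - γ * L) N) = T at *
  rw [le_div_iff₀ (by positivity)]
  have hT : γ * T * ‖gradient f (x N)‖ ^ 2 ≤ 2 * (f (x 0) - f (x N)) := by
    refine le_of_mul_le_mul_left ?_ hγ
    linarith
  have hsplit : 1 / (2 * L) * ‖gradient f (x N)‖ ^ 2 * (1 + γ * L * T) =
      1 / (2 * L) * ‖gradient f (x N)‖ ^ 2 + γ * T * ‖gradient f (x N)‖ ^ 2 / 2 := by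
    field_simp
  linarith
end

section
/- Let L > 0 and let f : E → ℝ be a differentiable function on a real inner product space E with f convex and x ↦ (L/2)‖x‖² − f(x) convex (f ∈ F_{0,L}), and assume f_* := inf_x f(x) > −∞. Fix an integer N ≥ 1 and stepsizes γ_0,…,γ_{N−1} > 0 with γ_i L ∈ (0, 3/2] for every i, and let x_{i+1} = x_i − γ_i ∇f(x_i). Then (1/(2L))·‖∇f(x_N)‖² ≤ (f(x_0) − f_*) / ( 1 + 2·Σ_{i=0}^{N−1} γ_i L ). -/
open scoped InnerProductSpace

section SmoothConvex

variable {E : Type*} [NormedAddCommGroup E] [InnerProductSpace ℝ E]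

/-- First-order lower bound for a differentiable convex function. -/
theorem ConvexOn.add_inner_le_of_hasGradientAt [CompleteSpace E] {f : E → ℝ} {x g : E}
    (hf : ConvexOn ℝ Set.univ f) (hg : HasGradientAt f g x) (y : E) :
    f x + ⟪g, y - x⟫_ℝ ≤ f y := by
  have hline : ConvexOn ℝ Set.univ (f ∘ AffineMap.lineMap (k := ℝ) x y) := by
    simpa using hf.comp_affineMap (AffineMap.lineMap (k := ℝ) x y)
  have hderiv : HasDerivAt (f ∘ AffineMap.lineMap (k := ℝ) x y) ⟪g, y - x⟫_ℝ 0 := by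
    have hg' : HasFDerivAt f (InnerProductSpace.toDual ℝ E g)
        (AffineMap.lineMap (k := ℝ) x y 0) := by
      simpa using hg.hasFDerivAt
    simpa using hg'.comp_hasDerivAt (0 : ℝ) AffineMap.hasDerivAt_lineMap
  have h := hline.le_slope_of_hasDerivAt (Set.mem_univ 0) (Set.mem_univ 1) zero_lt_one hderiv
  simp [slope_def_field] at h
  linarith

/-- Quadratic upper bound for a function `f` such that `L / 2 * ‖·‖ ^ 2 - f` is convex. -/
theorem le_add_inner_add_norm_sq_of_convexOn [CompleteSpace E] {f : E → ℝ} {L : ℝ} {x g : E}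
    (hf : ConvexOn ℝ Set.univ (fun z => L / 2 * ‖z‖ ^ 2 - f z)) (hg : HasGradientAt f g x)
    (y : E) : f y ≤ f x + ⟪g, y - x⟫_ℝ + L / 2 * ‖y - x‖ ^ 2 := by
  have hgrad : HasGradientAt (fun z => L / 2 * ‖z‖ ^ 2 - f z) (L • x - g) x := by
    rw [hasGradientAt_iff_hasFDerivAt]
    refine (((hasStrictFDerivAt_norm_sq x).hasFDerivAt.const_mul (L / 2)).sub
      hg.hasFDerivAt).congr_fderiv ?_
    ext v
    simp
    ring
  have h := hf.add_inner_le_of_hasGradientAt hgrad y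
  simp only [inner_sub_left, inner_sub_right, real_inner_smul_left,
    real_inner_self_eq_norm_sq] at h
  rw [norm_sub_sq_real, inner_sub_right, real_inner_comm x y]
  linarith

/-- Interpolation inequality for smooth convex functions. -/
theorem ConvexOn.add_inner_add_norm_sq_le [CompleteSpace E] {f : E → ℝ} {L : ℝ} {x y gx gy : E}
    (hL : 0 < L) (hcvx : ConvexOn ℝ Set.univ f)
    (hsmooth : ConvexOn ℝ Set.univ (fun z => L / 2 * ‖z‖ ^ 2 - f z))
    (hgx : HasGradientAt f gx x) (hgy : HasGradientAt f gy y) :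
    f x + ⟪gx, y - x⟫_ℝ + 1 / (2 * L) * ‖gx - gy‖ ^ 2 ≤ f y := by
  have hlower := hcvx.add_inner_le_of_hasGradientAt hgx (y - L⁻¹ • (gy - gx))
  have hupper := le_add_inner_add_norm_sq_of_convexOn hsmooth hgy (y - L⁻¹ • (gy - gx))
  rw [sub_right_comm, inner_sub_right, real_inner_smul_right] at hlower
  rw [sub_sub_cancel_left, inner_neg_right, real_inner_smul_right, norm_neg, norm_smul, mul_pow,
    Real.norm_eq_abs, sq_abs] at hupper
  have hself : ⟪gy, gy - gx⟫_ℝ - ⟪gx, gy - gx⟫_ℝ = ‖gy - gx‖ ^ 2 := by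
    rw [← inner_sub_left, real_inner_self_eq_norm_sq]
  have hcoef : L / 2 * (L⁻¹ ^ 2 * ‖gy - gx‖ ^ 2) = L⁻¹ * ‖gy - gx‖ ^ 2 / 2 := by
    field_simp
  have hcoef' : 1 / (2 * L) * ‖gx - gy‖ ^ 2 = L⁻¹ * ‖gy - gx‖ ^ 2 / 2 := by
    rw [norm_sub_rev]
    field_simp
  rw [hcoef']
  linear_combination hlower + hupper - L⁻¹ * hself + hcoef

/-- A smooth convex function exceeds its infimum by at least `‖g‖ ^ 2 / (2 * L)`, where `g` is
the gradient. -/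
theorem iInf_add_norm_sq_le_of_convexOn [CompleteSpace E] {f : E → ℝ} {L : ℝ} {x g : E}
    (hL : 0 < L) (hsmooth : ConvexOn ℝ Set.univ (fun z => L / 2 * ‖z‖ ^ 2 - f z))
    (hbdd : BddBelow (Set.range f)) (hg : HasGradientAt f g x) :
    (⨅ y, f y) + 1 / (2 * L) * ‖g‖ ^ 2 ≤ f x := by
  have hupper := le_add_inner_add_norm_sq_of_convexOn hsmooth hg (x - L⁻¹ • g)
  rw [sub_sub_cancel_left, inner_neg_right, real_inner_smul_right, norm_neg, norm_smul, mul_pow,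
    Real.norm_eq_abs, sq_abs, real_inner_self_eq_norm_sq] at hupper
  have hcoef : L / 2 * (L⁻¹ ^ 2 * ‖g‖ ^ 2) = L⁻¹ * ‖g‖ ^ 2 - 1 / (2 * L) * ‖g‖ ^ 2 := by
    field_simp
    ring
  linarith [ciInf_le hbdd (x - L⁻¹ • g)]

variable [CompleteSpace E] {f : E → ℝ} {L γ : ℝ} {x g g' : E}

/-- A gradient step of size at most `2 / L` does not increase the gradient norm. -/
theorem norm_gradient_step_le (hL : 0 < L) (hcvx : ConvexOn ℝ Set.univ f)
    (hsmooth : ConvexOn ℝ Set.univ (fun z => L / 2 * ‖z‖ ^ 2 - f z))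
    (hγ : 0 < γ) (hγL : γ * L ≤ 2)
    (hg : HasGradientAt f g x) (hg' : HasGradientAt f g' (x - γ • g)) : ‖g'‖ ≤ ‖g‖ := by
  have h := hcvx.add_inner_add_norm_sq_le hL hsmooth hg hg'
  have h' := hcvx.add_inner_add_norm_sq_le hL hsmooth hg' hg
  rw [sub_sub_cancel_left, inner_neg_right, real_inner_smul_right,
    real_inner_self_eq_norm_sq] at h
  rw [sub_sub_cancel, real_inner_smul_right, norm_sub_rev] at h'
  have hcoef : γ / 2 * ‖g - g'‖ ^ 2 ≤ 2 * (1 / (2 * L)) * ‖g - g'‖ ^ 2 := by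
    gcongr
    field_simp
    linarith
  have hsq : ‖g - g'‖ ^ 2 = ‖g‖ ^ 2 - 2 * ⟪g', g⟫_ℝ + ‖g'‖ ^ 2 := by
    rw [norm_sub_sq_real, real_inner_comm]
  refine (sq_le_sq₀ (norm_nonneg _) (norm_nonneg _)).mp ?_
  refine le_of_mul_le_mul_left ?_ hγ
  rw [hsq] at h h' hcoef
  linarith

/-- Decrease of a smooth convex function along a gradient step of size at most `3 / (2 * L)`. -/
theorem gradient_step_add_mul_norm_sq_le (hL : 0 < L) (hcvx : ConvexOn ℝ Set.univ f)
    (hsmooth : ConvexOn ℝ Set.univ (fun z => L / 2 * ‖z‖ ^ 2 - f z)) (hγL : γ * L ≤ 3 / 2)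
    (hg : HasGradientAt f g x) (hg' : HasGradientAt f g' (x - γ • g)) :
    f (x - γ • g) + γ * ‖g'‖ ^ 2 ≤ f x := by
  have h := hcvx.add_inner_add_norm_sq_le hL hsmooth hg hg'
  have h' := hcvx.add_inner_add_norm_sq_le hL hsmooth hg' hg
  rw [sub_sub_cancel_left, inner_neg_right, real_inner_smul_right,
    real_inner_self_eq_norm_sq] at h
  rw [sub_sub_cancel, real_inner_smul_right, norm_sub_rev] at h'
  have hcoef : γ * ‖g - g'‖ ^ 2 ≤ 3 * (1 / (2 * L)) * ‖g - g'‖ ^ 2 := by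
    gcongr
    field_simp
    linarith
  have hsq : ‖g - g'‖ ^ 2 = ‖g‖ ^ 2 - 2 * ⟪g', g⟫_ℝ + ‖g'‖ ^ 2 := by
    rw [norm_sub_sq_real, real_inner_comm]
  rw [hsq] at h h' hcoef
  linarith

end SmoothConvex

/-- **Rate of gradient descent with variable stepsizes on smooth convex functions
(Corollary 1 / `corr:cvx_rates_variable_stepsizes`).**
Let `f ∈ F_{0,L}` be bounded below and run `N ≥ 1` steps with stepsizes `γ_i`,
`0 < γ_i L ≤ 3/2`. Then
`(1/(2L))‖∇f(x_N)‖² ≤ (f(x₀) − f_*)/(1 + 2·Σ_{i<N} γ_i L)`. -/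
theorem gd_convex_rate_variable_stepsizes
    {E : Type*} [NormedAddCommGroup E] [InnerProductSpace ℝ E] [CompleteSpace E]
    (L : ℝ) (hL : 0 < L) (f : E → ℝ) (hdiff : Differentiable ℝ f)
    (hcvx : ConvexOn ℝ Set.univ f)
    (hsmooth : ConvexOn ℝ Set.univ (fun z => L / 2 * ‖z‖ ^ 2 - f z))
    (hbdd : BddBelow (Set.range f))
    (N : ℕ) (hN : 1 ≤ N)
    (γ : ℕ → ℝ) (hγ : ∀ i < N, 0 < γ i ∧ γ i * L ≤ 3 / 2)
    (x : ℕ → E) (hx : ∀ i < N, x (i + 1) = x i - γ i • gradient f (x i)) :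
    1 / (2 * L) * ‖gradient f (x N)‖ ^ 2 ≤
      (f (x 0) - ⨅ y, f y) / (1 + 2 * ∑ i ∈ Finset.range N, γ i * L) := by
  have hgrad (i : ℕ) : HasGradientAt f (gradient f (x i)) (x i) := (hdiff (x i)).hasGradientAt
  have hdescent : ∀ n ≤ N,
      f (x n) + (∑ i ∈ Finset.range n, γ i) * ‖gradient f (x n)‖ ^ 2 ≤ f (x 0) := by
    intro n
    induction n with
    | zero => simp
    | succ n ih =>
      intro hn
      obtain ⟨hpos, hle⟩ := hγ n hn
      have hnext := hgrad (n + 1)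
      rw [hx n hn] at hnext
      have hnorm := norm_gradient_step_le hL hcvx hsmooth hpos (by linarith) (hgrad n) hnext
      have hdec := gradient_step_add_mul_norm_sq_le hL hcvx hsmooth hle (hgrad n) hnext
      rw [← hx n hn] at hnorm hdec
      have hsum : 0 ≤ ∑ i ∈ Finset.range n, γ i := Finset.sum_nonneg fun i hi =>
        (hγ i ((Finset.mem_range.mp hi).trans hn)).1.le
      have hmono : (∑ i ∈ Finset.range n, γ i) * ‖gradient f (x (n + 1))‖ ^ 2 ≤
          (∑ i ∈ Finset.range n, γ i) * ‖gradient f (x n)‖ ^ 2 := by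
        gcongr
      rw [Finset.sum_range_succ, add_mul]
      linarith [ih (Nat.le_of_succ_le hn)]
  have hinf := iInf_add_norm_sq_le_of_convexOn hL hsmooth hbdd (hgrad N)
  have hsum : 0 ≤ ∑ i ∈ Finset.range N, γ i := Finset.sum_nonneg fun i hi =>
    (hγ i (Finset.mem_range.mp hi)).1.le
  rw [← Finset.sum_mul, le_div_iff₀ (by positivity)]
  have hexpand : 1 / (2 * L) * ‖gradient f (x N)‖ ^ 2 *
      (1 + 2 * ((∑ i ∈ Finset.range N, γ i) * L)) = 1 / (2 * L) * ‖gradient f (x N)‖ ^ 2 +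
        (∑ i ∈ Finset.range N, γ i) * ‖gradient f (x N)‖ ^ 2 := by
    field_simp
  linarith [hdescent N le_rfl]
end

section
/- Let L > 0 and μ < L, set κ := μ/L, and let f : E → ℝ be a differentiable function on a real inner product space E with f ∈ F_{μ,L}. Fix an integer k ≥ 1 and a stepsize γ > 0 with γL ∈ (1, 2/(1 + max{κ,0})) such that T_i(γL, κ) ≥ 0 for all integers 1 ≤ i ≤ k (equivalently, γL ≥ γ̄_k, the k-th stepsize threshold). Let x_0, x_1, …, x_{k+1} be generated by x_{i+1} = x_i − γ∇f(x_i), and write ρ := 1 − γL, η := 1 − γμ (with γμ := γ·μ). Then (f(x_0) − f(x_{k+1}))/γ ≥ (−η²ρ²·T_{k+1}(γL,κ)/(η² − ρ²)) · ‖∇f(x_k)‖²/2 + ((T_k(γL,κ) + (η − ρ))/(η² − ρ²)) · ‖∇f(x_{k+1})‖²/2. -/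
/-- `E_k(x) := Σ_{j=1}^{2k} x^{−j}` (so `E_0 = 0`). -/
noncomputable def Efun (k : ℕ) (x : ℝ) : ℝ := ∑ j ∈ Finset.Icc 1 (2 * k), x ^ (-(j : ℤ))

/-- `T_k(t, κ) := E_k(1 − κ·t) − E_k(1 − t)`. -/
noncomputable def Tfun (k : ℕ) (t κ : ℝ) : ℝ := Efun k (1 - κ * t) - Efun k (1 - t)

lemma Efun_zero (x : ℝ) : Efun 0 x = 0 := by simp [Efun]

lemma Efun_succ_add (k : ℕ) (x : ℝ) :
    Efun (k + 1) x = Efun k x + x⁻¹ ^ (2 * k + 1) + x⁻¹ ^ (2 * k + 2) := by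
  simp only [Efun, zpow_neg, zpow_natCast, inv_pow]
  rw [show 2 * (k + 1) = 2 * k + 1 + 1 by ring, Finset.sum_Icc_succ_top (by omega),
    Finset.sum_Icc_succ_top (by omega)]

lemma Efun_succ (k : ℕ) {x : ℝ} (hx : x ≠ 0) :
    Efun (k + 1) x = (Efun k x + 1 + x) / x ^ 2 := by
  induction k with
  | zero => rw [Efun_succ_add, Efun_zero]; simp only [inv_pow]; field_simp; ring
  | succ k ih =>
    conv_lhs => rw [Efun_succ_add, ih]
    rw [Efun_succ_add]
    simp only [inv_pow]
    field_simp
    ring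

lemma one_sub_mul_Efun (k : ℕ) {x : ℝ} (hx : x ≠ 0) :
    (1 - x) * Efun k x = x⁻¹ ^ (2 * k) - 1 := by
  induction k with
  | zero => simp [Efun_zero]
  | succ k ih =>
    rw [Efun_succ_add, mul_add, mul_add, ih]
    simp only [inv_pow]
    field_simp
    ring

lemma Efun_nonneg (k : ℕ) {x : ℝ} (hx : 0 < x) : 0 ≤ Efun k x :=
  Finset.sum_nonneg fun _ _ => by positivity

lemma sub_one_mul_Efun_le (k : ℕ) {x : ℝ} (hx : x ≠ 0) : (x - 1) * Efun k x ≤ 1 := by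
  have h : 0 ≤ x⁻¹ ^ (2 * k) := by rw [pow_mul]; positivity
  linarith [one_sub_mul_Efun k hx]

lemma Efun_nonneg_of_neg (k : ℕ) {x : ℝ} (hx : x < 0) (hx' : -1 < x) : 0 ≤ Efun k x := by
  induction k with
  | zero => simp [Efun_zero]
  | succ k ih =>
    rw [Efun_succ k hx.ne]
    exact div_nonneg (by linarith) (sq_nonneg x)

lemma one_sub_mul_Efun_le (k : ℕ) {η ρ : ℝ} (hρ : ρ < 0) (hηρ : -ρ < η) :
    (1 - η) * Efun k η ≤ (1 - ρ) * Efun k ρ := by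
  rw [one_sub_mul_Efun k (by linarith), one_sub_mul_Efun k hρ.ne, pow_mul, pow_mul ρ⁻¹]
  gcongr ?_ ^ k - 1
  rw [inv_pow, inv_pow]
  have : ρ ^ 2 ≤ η ^ 2 := by nlinarith
  have : 0 < ρ ^ 2 := by nlinarith
  gcongr

lemma mul_sq_mul_Efun_le (k : ℕ) {η ρ : ℝ} (hρ : ρ < 0) (hρ' : -1 < ρ) (hηρ : -ρ < η) :
    (1 + ρ) * η ^ 2 * Efun k η ≤ (1 + η) * ρ ^ 2 * Efun k ρ := by
  have hη : 0 < η := by linarith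
  have hsq : ρ ^ 2 ≤ η ^ 2 := by nlinarith
  induction k with
  | zero => simp [Efun_zero]
  | succ k ih =>
    have hb := Efun_nonneg_of_neg k hρ hρ'
    have hle : (1 + ρ) * Efun k η ≤ (1 + η) * Efun k ρ := by
      have : (1 + η) * ρ ^ 2 * Efun k ρ ≤ (1 + η) * η ^ 2 * Efun k ρ := by gcongr
      have hη2 : 0 < η ^ 2 := by positivity
      nlinarith
    rw [Efun_succ k hη.ne', Efun_succ k hρ.ne, mul_assoc, mul_assoc,
      mul_div_cancel₀ _ (pow_ne_zero 2 hη.ne'), mul_div_cancel₀ _ (pow_ne_zero 2 hρ.ne)]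
    linarith

/-- Nonnegativity of the weight on backward interpolation inequalities. -/
lemma backward_weight_nonneg {η ρ a b : ℝ} (hρ : ρ < 0) (hρ' : -1 < ρ) (hηρ : -ρ < η)
    (ha : 0 ≤ a) (hb : 0 ≤ b) (hab : (1 - η) * a ≤ (1 - ρ) * b) :
    0 ≤ -ρ * (η - ρ) + (a - b) * (-ρ + (1 + ρ) * (η + ρ) / 2) +
      ((a + 1 + η) / η ^ 2 - (b + 1 + ρ) / ρ ^ 2) *
        (-η * ρ ^ 2 + ρ * (1 + η) * (η + ρ) / 2) := by
  obtain ⟨R, rfl⟩ : ∃ R, ρ = -R := ⟨-ρ, by ring⟩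
  have hR : 0 < R := by linarith
  have hη : 0 < η := by linarith
  have hd : 0 < η - R := by linarith
  have key : 0 ≤ (R + η) * (η ^ 2 * (1 - R) + (η - R)) + a * R * ((1 - R) * η ^ 2 - R * (1 - η))
      + b * η ^ 2 * (η + 1 + R + R ^ 2) := by
    have h1 : 0 ≤ (R + η) * (η ^ 2 * (1 - R) + (η - R)) :=
      mul_nonneg (by linarith) (add_nonneg (mul_nonneg (sq_nonneg _) (by linarith)) hd.le)
    have h2 : 0 ≤ a * R * ((1 - R) * η ^ 2) :=
      mul_nonneg (by positivity) (mul_nonneg (by linarith) (sq_nonneg _))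
    have h3 : R ^ 2 * ((1 - η) * a) ≤ R ^ 2 * ((1 + R) * b) := by
      rw [sub_neg_eq_add] at hab
      gcongr
    have h4 : R ^ 2 * ((1 + R) * b) ≤ η ^ 2 * ((η + 1 + R + R ^ 2) * b) := by
      have : R ≤ η := by linarith
      have : 1 + R ≤ η + 1 + R + R ^ 2 := by nlinarith
      gcongr
    linarith
  have e : -(-R) * (η - -R) + (a - b) * (-(-R) + (1 + -R) * (η + -R) / 2) +
      ((a + 1 + η) / η ^ 2 - (b + 1 + -R) / (-R) ^ 2) *
        (-η * (-R) ^ 2 + -R * (1 + η) * (η + -R) / 2) =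
      (η - R) / (2 * η ^ 2 * R) * ((R + η) * (η ^ 2 * (1 - R) + (η - R)) +
        a * R * ((1 - R) * η ^ 2 - R * (1 - η)) + b * η ^ 2 * (η + 1 + R + R ^ 2)) := by
    field_simp
    ring
  rw [e]
  exact mul_nonneg (by positivity) key

/-- Nonnegativity of the weight on forward interpolation inequalities. -/
lemma forward_weight_nonneg {η ρ a b : ℝ} (hρ : ρ < 0) (hρ' : -1 < ρ) (hηρ : -ρ < η)
    (ha : 0 ≤ a) (hb : 0 ≤ b) (ha' : (η - 1) * a ≤ 1)
    (hab : (1 + ρ) * η ^ 2 * a ≤ (1 + η) * ρ ^ 2 * b) :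
    0 ≤ η * (η - ρ) + (a - b) * (-ρ + (1 - η) * (η + ρ) / 2) +
      ((a + 1 + η) / η ^ 2 - (b + 1 + ρ) / ρ ^ 2) *
        (-η * ρ ^ 2 + η * (ρ - 1) * (η + ρ) / 2) := by
  obtain ⟨R, rfl⟩ : ∃ R, ρ = -R := ⟨-ρ, by ring⟩
  have hR : 0 < R := by linarith
  have hη : 0 < η := by linarith
  have hd : 0 < η - R := by linarith
  have key : 0 ≤ (R + η) * (R ^ 2 + (η - R) + R ^ 2 * η)
      - a * R ^ 2 * ((1 - R) + η * (η - 1)) + b * η * ((1 + R + R ^ 2) * η + R ^ 2) := by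
    have hsq : R ^ 2 ≤ η ^ 2 := by nlinarith
    have h1 : a * R ^ 2 * (η * (η - 1)) ≤ (R + η) * (R ^ 2 + (η - R) + R ^ 2 * η) := by
      rcases le_total η 1 with h | h
      · have : a * R ^ 2 * (η * (η - 1)) ≤ 0 :=
          mul_nonpos_of_nonneg_of_nonpos (by positivity)
            (mul_nonpos_of_nonneg_of_nonpos hη.le (by linarith))
        have : 0 ≤ (R + η) * (R ^ 2 + (η - R) + R ^ 2 * η) := by positivity
        linarith
      · have h2 : R ^ 2 * η * ((η - 1) * a) ≤ R ^ 2 * η * 1 := by gcongr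
        have h3 : R ^ 2 * η * 1 ≤ R ^ 2 * η * (R + η) := by gcongr; linarith
        have h4 : 0 ≤ (R + η) * (R ^ 2 + (η - R)) := by positivity
        linarith
    have h2 : a * R ^ 2 * (1 - R) ≤ b * η * ((1 + R + R ^ 2) * η + R ^ 2) := by
      have h3 : a * R ^ 2 * (1 - R) ≤ a * η ^ 2 * (1 - R) :=
        mul_le_mul_of_nonneg_right (by gcongr) (by linarith)
      have h4 : b * R ^ 2 ≤ b * η ^ 2 := by gcongr
      have h5 : 0 ≤ b * η ^ 2 * (R + R ^ 2) := by positivity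
      linarith
    linarith
  have e : η * (η - -R) + (a - b) * (-(-R) + (1 - η) * (η + -R) / 2) +
      ((a + 1 + η) / η ^ 2 - (b + 1 + -R) / (-R) ^ 2) *
        (-η * (-R) ^ 2 + η * (-R - 1) * (η + -R) / 2) =
      (η - R) / (2 * η * R ^ 2) * ((R + η) * (R ^ 2 + (η - R) + R ^ 2 * η)
      - a * R ^ 2 * ((1 - R) + η * (η - 1)) + b * η * ((1 + R + R ^ 2) * η + R ^ 2)) := by
    field_simp
    ring
  rw [e]
  exact mul_nonneg (by positivity) key

lemma last_forward_weight_nonneg {η ρ a b : ℝ} (hρ : ρ < 0) (hηρ : -ρ < η)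
    (hb : 0 ≤ b) (hab : b ≤ a) (ha' : (η - 1) * a ≤ 1) :
    0 ≤ η * (η - ρ) + (a - b) * (-ρ + (1 - η) * (η + ρ) / 2) := by
  have hη : 0 < η := by linarith
  have hηρ' : 0 < η - ρ := by linarith
  have hT : (a - b) * (-ρ + (1 - η) * (η + ρ) / 2) =
      (a - b) * (η * -ρ) - (η - 1) * (a - b) * (η - ρ) / 2 := by ring
  rw [hT]
  have h0 : 0 ≤ (a - b) * (η * -ρ) := mul_nonneg (by linarith) (mul_nonneg hη.le (by linarith))
  rcases le_total η 1 with h | h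
  · have : 0 ≤ (1 - η) * (a - b) * (η - ρ) :=
      mul_nonneg (mul_nonneg (by linarith) (by linarith)) hηρ'.le
    nlinarith [mul_pos hη hηρ']
  · have h1 : (η - 1) * (a - b) ≤ 1 := by nlinarith
    have h2 : (η - 1) * (a - b) * (η - ρ) ≤ 1 * (η - ρ) := by gcongr
    nlinarith

lemma last_backward_weight_nonneg {η ρ T : ℝ} (hρ : ρ < 0) (hρ' : -1 < ρ) (hηρ : -ρ < η)
    (hT : 0 ≤ T) : 0 ≤ -ρ * (η - ρ) + T * (-ρ + (1 + ρ) * (η + ρ) / 2) := by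
  have h1 : 0 ≤ -ρ * (η - ρ) := mul_nonneg (by linarith) (by linarith)
  have h2 : 0 ≤ (1 + ρ) * (η + ρ) := mul_nonneg (by linarith) (by linarith)
  have h3 : 0 ≤ T * (-ρ + (1 + ρ) * (η + ρ) / 2) := mul_nonneg hT (by linarith)
  linarith

section Interpolation

variable {E : Type*} [NormedAddCommGroup E] [InnerProductSpace ℝ E]

lemma ConvexOn.add_fderiv_sub_le {f : E → ℝ} {f' : E →L[ℝ] ℝ} {y : E}
    (hf : ConvexOn ℝ Set.univ f) (hf' : HasFDerivAt f f' y) (z : E) :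
    f y + f' (z - y) ≤ f z := by
  have hline : ConvexOn ℝ Set.univ (fun t : ℝ => f (AffineMap.lineMap y z t)) :=
    hf.comp_affineMap (AffineMap.lineMap y z)
  have hderiv : HasDerivAt (fun t : ℝ => f (AffineMap.lineMap y z t)) (f' (z - y)) 0 := by
    refine HasFDerivAt.comp_hasDerivAt (0 : ℝ) (f := fun t : ℝ => AffineMap.lineMap y z t)
      ?_ AffineMap.hasDerivAt_lineMap
    simpa using hf'
  have := hline.le_slope_of_hasDerivAt (Set.mem_univ _) (Set.mem_univ _) one_pos hderiv
  simp [slope_def_field, -map_sub] at this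
  linarith

lemma hasFDerivAt_mul_norm_sq (c : ℝ) (y : E) :
    HasFDerivAt (fun z : E => c / 2 * ‖z‖ ^ 2) (c • innerSL ℝ y) y := by
  refine ((hasStrictFDerivAt_norm_sq y).hasFDerivAt.const_mul (c / 2)).congr_fderiv ?_
  ext v
  simp
  ring

lemma norm_sq_sub_eq (y z : E) : ‖z‖ ^ 2 - ‖y‖ ^ 2 - 2 * inner ℝ y (z - y) = ‖z - y‖ ^ 2 := by
  simp only [← real_inner_self_eq_norm_sq, inner_sub_left, inner_sub_right,
    real_inner_comm z y]
  ring

/-- Smooth and (weakly or strongly) convex functions satisfy the interpolation inequality. -/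
lemma interpolation_inequality [CompleteSpace E] {L μ : ℝ} (hμL : μ < L) {f : E → ℝ}
    (hdiff : Differentiable ℝ f)
    (hsmooth : ConvexOn ℝ Set.univ (fun z => L / 2 * ‖z‖ ^ 2 - f z))
    (hcurv : ConvexOn ℝ Set.univ (fun z => f z - μ / 2 * ‖z‖ ^ 2)) (x y : E) :
    f y + inner ℝ (gradient f y) (x - y) + μ / 2 * ‖x - y‖ ^ 2 +
      ‖gradient f x - gradient f y - μ • (x - y)‖ ^ 2 / (2 * (L - μ)) ≤ f x := by
  have hgrad (w : E) : HasFDerivAt f (innerSL ℝ (gradient f w)) w :=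
    (hdiff w).hasGradientAt.hasFDerivAt
  have lower (z : E) : f y + inner ℝ (gradient f y) (z - y) + μ / 2 * ‖z - y‖ ^ 2 ≤ f z := by
    have h := hcurv.add_fderiv_sub_le ((hgrad y).sub (hasFDerivAt_mul_norm_sq μ y)) z
    simp only [sub_apply, smul_apply, innerSL_apply_apply, smul_eq_mul] at h
    rw [← norm_sq_sub_eq y z]
    linarith
  have upper (z : E) : f z ≤ f x + inner ℝ (gradient f x) (z - x) + L / 2 * ‖z - x‖ ^ 2 := by
    have h := hsmooth.add_fderiv_sub_le ((hasFDerivAt_mul_norm_sq L x).sub (hgrad x)) z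
    simp only [sub_apply, smul_apply, innerSL_apply_apply, smul_eq_mul] at h
    rw [← norm_sq_sub_eq x z]
    linarith
  have hM : 0 < L - μ := sub_pos.mpr hμL
  set d : E := gradient f x - gradient f y - μ • (x - y) with hd
  have h := (lower (x - (L - μ)⁻¹ • d)).trans (upper (x - (L - μ)⁻¹ • d))
  have hx : gradient f x = d + gradient f y + μ • (x - y) := by rw [hd]; abel
  rw [hx, sub_sub_cancel_left, show x - (L - μ)⁻¹ • d - y = (x - y) - (L - μ)⁻¹ • d by abel] at h
  simp only [← real_inner_self_eq_norm_sq, inner_sub_left (x - y), inner_sub_right _ (x - y),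
    inner_add_left, inner_neg_left, inner_neg_right, real_inner_smul_left, real_inner_smul_right,
    real_inner_comm (x - y) d] at h ⊢
  have e : inner ℝ d d / (2 * (L - μ)) =
      (L - μ)⁻¹ * inner ℝ d d + μ / 2 * ((L - μ)⁻¹ * ((L - μ)⁻¹ * inner ℝ d d)) -
        L / 2 * ((L - μ)⁻¹ * ((L - μ)⁻¹ * inner ℝ d d)) := by
    field_simp
    ring
  rw [e]
  linarith

/-- Twice the slack of the interpolation inequality for stepsize one: the function values and
gradients at the two points are `F, g` and `F', g'`, and `d` is the displacement between them. -/
noncomputable def interpolationSlack (η ρ F F' : ℝ) (g g' d : E) : ℝ :=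
  2 * (F - F') - 2 * inner ℝ g' d - (1 - η) * ‖d‖ ^ 2 - ‖g - g' - (1 - η) • d‖ ^ 2 / (η - ρ)

lemma interpolationSlack_nonneg [CompleteSpace E] {L μ : ℝ} (hμL : μ < L) {f : E → ℝ}
    (hdiff : Differentiable ℝ f)
    (hsmooth : ConvexOn ℝ Set.univ (fun z => L / 2 * ‖z‖ ^ 2 - f z))
    (hcurv : ConvexOn ℝ Set.univ (fun z => f z - μ / 2 * ‖z‖ ^ 2))
    {γ : ℝ} (hγ : 0 < γ) {x y d : E} (hd : x - y = γ • d) :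
    0 ≤ interpolationSlack (1 - γ * μ) (1 - γ * L) (f x / γ) (f y / γ)
      (gradient f x) (gradient f y) d := by
  have h := interpolation_inequality hμL hdiff hsmooth hcurv x y
  have hM : L - μ ≠ 0 := (sub_pos.mpr hμL).ne'
  rw [hd, norm_smul, mul_pow, Real.norm_eq_abs, sq_abs, real_inner_smul_right, smul_smul,
    mul_comm μ γ] at h
  unfold interpolationSlack
  rw [sub_sub_cancel, show 1 - γ * μ - (1 - γ * L) = γ * (L - μ) by ring]
  set S := ‖gradient f x - gradient f y - (γ * μ) • d‖ ^ 2
  have e : 2 * (f x / γ - f y / γ) - 2 * inner ℝ (gradient f y) d - γ * μ * ‖d‖ ^ 2 -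
        S / (γ * (L - μ)) =
      2 / γ * (f x - (f y + γ * inner ℝ (gradient f y) d + μ / 2 * (γ ^ 2 * ‖d‖ ^ 2) +
        S / (2 * (L - μ)))) := by
    field_simp
    ring
  rw [e]
  exact mul_nonneg (by positivity) (sub_nonneg.mpr h)

/-- The combination of the six interpolation inequalities among three consecutive iterates
that transfers gradient norms along the trajectory. -/
lemma three_point_identity {η ρ : ℝ} (hηρ : η - ρ ≠ 0) (F₀ F₁ F₂ : ℝ) (g₀ g₁ g₂ : E) :
    (-η * ρ ^ 2 + η * (ρ - 1) * (η + ρ) / 2) * interpolationSlack η ρ F₀ F₁ g₀ g₁ g₀ +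
    (-η * ρ ^ 2 + ρ * (1 + η) * (η + ρ) / 2) * interpolationSlack η ρ F₁ F₀ g₁ g₀ (-g₀) +
    (-ρ + (1 - η) * (η + ρ) / 2) * interpolationSlack η ρ F₁ F₂ g₁ g₂ g₁ +
    (-ρ + (1 + ρ) * (η + ρ) / 2) * interpolationSlack η ρ F₂ F₁ g₂ g₁ (-g₁) +
    η * (η + ρ) / 2 * interpolationSlack η ρ F₀ F₂ g₀ g₂ (g₀ + g₁) +
    -ρ * (η + ρ) / 2 * interpolationSlack η ρ F₂ F₀ g₂ g₀ (-(g₀ + g₁)) =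
      -η ^ 2 * ρ ^ 2 * ‖g₀‖ ^ 2 + (η ^ 2 + ρ ^ 2) * ‖g₁‖ ^ 2 - ‖g₂‖ ^ 2 := by
  simp only [interpolationSlack, ← real_inner_self_eq_norm_sq, inner_sub_left, inner_sub_right,
    inner_add_left, inner_add_right, inner_neg_left, inner_neg_right, real_inner_smul_left,
    real_inner_smul_right, smul_add, smul_neg, real_inner_comm g₀ g₁, real_inner_comm g₀ g₂,
    real_inner_comm g₁ g₂]
  field_simp
  ring

/-- The combination of the two interpolation inequalities along one step in which the inner
product of the gradients cancels. -/
lemma one_step_identity {η ρ : ℝ} (hηρ : η - ρ ≠ 0) (F₀ F₁ : ℝ) (g₀ g₁ : E) :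
    η * (η - ρ) * interpolationSlack η ρ F₀ F₁ g₀ g₁ g₀ +
    -ρ * (η - ρ) * interpolationSlack η ρ F₁ F₀ g₁ g₀ (-g₀) =
      (η ^ 2 - ρ ^ 2) * (2 * (F₀ - F₁)) - (η ^ 2 - ρ ^ 2 + η * ρ * (η - ρ)) * ‖g₀‖ ^ 2
        - (η - ρ) * ‖g₁‖ ^ 2 := by
  simp only [interpolationSlack, ← real_inner_self_eq_norm_sq, inner_sub_left, inner_sub_right,
    inner_neg_left, inner_neg_right, real_inner_smul_left,
    real_inner_smul_right, smul_neg, real_inner_comm g₀ g₁]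
  field_simp
  ring

end Interpolation

section Descent

variable {E : Type*} [NormedAddCommGroup E] [InnerProductSpace ℝ E]

/-- Multistep descent, sharpened by the unused part of the last two interpolation inequalities. -/
lemma multistep_descent_with_slack {η ρ : ℝ} (hρ : ρ < 0) (hρ' : -1 < ρ) (hηρ : -ρ < η)
    (F : ℕ → ℝ) (g : ℕ → E) (j : ℕ)
    (hfwd : ∀ i ≤ j, 0 ≤ interpolationSlack η ρ (F i) (F (i + 1)) (g i) (g (i + 1)) (g i))
    (hbwd : ∀ i ≤ j, 0 ≤ interpolationSlack η ρ (F (i + 1)) (F i) (g (i + 1)) (g i) (-g i))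
    (hfwd₂ : ∀ i < j, 0 ≤ interpolationSlack η ρ (F i) (F (i + 2)) (g i) (g (i + 2))
      (g i + g (i + 1)))
    (hbwd₂ : ∀ i < j, 0 ≤ interpolationSlack η ρ (F (i + 2)) (F i) (g (i + 2)) (g i)
      (-(g i + g (i + 1))))
    (hT : ∀ i ≤ j, Efun i ρ ≤ Efun i η) :
    (η * (η - ρ) + (Efun j η - Efun j ρ) * (-ρ + (1 - η) * (η + ρ) / 2)) *
        interpolationSlack η ρ (F j) (F (j + 1)) (g j) (g (j + 1)) (g j) +
      (-ρ * (η - ρ) + (Efun j η - Efun j ρ) * (-ρ + (1 + ρ) * (η + ρ) / 2)) *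
        interpolationSlack η ρ (F (j + 1)) (F j) (g (j + 1)) (g j) (-g j) ≤
    (η ^ 2 - ρ ^ 2) * (2 * (F 0 - F (j + 1))) +
      η ^ 2 * ρ ^ 2 * (Efun (j + 1) η - Efun (j + 1) ρ) * ‖g j‖ ^ 2 -
      (Efun j η - Efun j ρ + (η - ρ)) * ‖g (j + 1)‖ ^ 2 := by
  have hη : 0 < η := by linarith
  have hd : η - ρ ≠ 0 := by linarith
  have hT_succ (i : ℕ) : η ^ 2 * ρ ^ 2 * (Efun (i + 1) η - Efun (i + 1) ρ) =
      ρ ^ 2 * (Efun i η + 1 + η) - η ^ 2 * (Efun i ρ + 1 + ρ) := by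
    rw [Efun_succ i hη.ne', Efun_succ i hρ.ne]
    have := hη.ne'
    have := hρ.ne
    field_simp
  induction j with
  | zero =>
    rw [hT_succ]
    have := one_step_identity hd (F 0) (F 1) (g 0) (g 1)
    simp only [Efun_zero, zero_add]
    linarith
  | succ j ih =>
    have ih := ih (fun i hi => hfwd i (by omega)) (fun i hi => hbwd i (by omega))
      (fun i hi => hfwd₂ i (by omega)) (fun i hi => hbwd₂ i (by omega))
      (fun i hi => hT i (by omega))
    have ha := Efun_nonneg j hη
    have hb := Efun_nonneg_of_neg j hρ hρ'
    have wf := forward_weight_nonneg hρ hρ' hηρ ha hb (sub_one_mul_Efun_le j hη.ne')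
      (mul_sq_mul_Efun_le j hρ hρ' hηρ)
    have wb := backward_weight_nonneg hρ hρ' hηρ ha hb (one_sub_mul_Efun_le j hρ hηρ)
    rw [← Efun_succ j hη.ne', ← Efun_succ j hρ.ne] at wf wb
    have hT' : 0 ≤ Efun (j + 1) η - Efun (j + 1) ρ := sub_nonneg.mpr (hT (j + 1) le_rfl)
    have hf := mul_nonneg wf (hfwd j (by omega))
    have hb := mul_nonneg wb (hbwd j (by omega))
    have hηρ' : 0 ≤ η + ρ := by linarith
    have hf₂ := mul_nonneg (mul_nonneg hT' (show 0 ≤ η * (η + ρ) / 2 by positivity))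
      (hfwd₂ j (by omega))
    have hb₂ := mul_nonneg (mul_nonneg hT' (show 0 ≤ -ρ * (η + ρ) / 2 from
      div_nonneg (mul_nonneg (by linarith) hηρ') zero_le_two)) (hbwd₂ j (by omega))
    have one := one_step_identity hd (F (j + 1)) (F (j + 2)) (g (j + 1)) (g (j + 2))
    have three := congrArg ((Efun (j + 1) η - Efun (j + 1) ρ) * ·)
      (three_point_identity hd (F j) (F (j + 1)) (F (j + 2)) (g j) (g (j + 1)) (g (j + 2)))
    have hn : (Efun j η - Efun j ρ + (η - ρ)) * ‖g (j + 1)‖ ^ 2 =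
        (η ^ 2 * Efun (j + 1) η - ρ ^ 2 * Efun (j + 1) ρ) * ‖g (j + 1)‖ ^ 2 := by
      rw [Efun_succ j hη.ne', Efun_succ j hρ.ne, mul_div_cancel₀ _ (pow_ne_zero 2 hη.ne'),
        mul_div_cancel₀ _ (pow_ne_zero 2 hρ.ne)]
      ring
    rw [hT_succ (j + 1)]
    simp only [add_assoc, Nat.reduceAdd] at *
    linarith

end Descent

/-- **Multistep descent (Lemma 8 / `lemma:hypo_GN4SD`, inequality (GN4SD)).**
Let `f ∈ F_{μ,L}`, `κ = μ/L`, `k ≥ 1`, and `γ > 0` with `γL ∈ (1, 2/(1+[κ]₊))` and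
`T_i(γL,κ) ≥ 0` for all `1 ≤ i ≤ k` (i.e. `γL ≥ γ̄_k`). With `ρ = 1−γL`, `η = 1−γμ`,
after `k+1` gradient steps:
`(f(x₀) − f(x_{k+1}))/γ ≥ (−η²ρ²T_{k+1}/(η²−ρ²))·‖∇f(x_k)‖²/2 +
 ((T_k + (η−ρ))/(η²−ρ²))·‖∇f(x_{k+1})‖²/2`. -/
theorem multistep_descent_GN4SD
    {E : Type*} [NormedAddCommGroup E] [InnerProductSpace ℝ E] [CompleteSpace E]
    (L μ : ℝ) (hL : 0 < L) (hμL : μ < L) (κ : ℝ) (hκ : κ = μ / L)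
    (f : E → ℝ) (hdiff : Differentiable ℝ f)
    (hsmooth : ConvexOn ℝ Set.univ (fun z => L / 2 * ‖z‖ ^ 2 - f z))
    (hcurv : ConvexOn ℝ Set.univ (fun z => f z - μ / 2 * ‖z‖ ^ 2))
    (k : ℕ) (hk : 1 ≤ k)
    (γ : ℝ) (hγ : 0 < γ) (hγL : 1 < γ * L) (hγL' : γ * L < 2 / (1 + max κ 0))
    (hT : ∀ i : ℕ, 1 ≤ i → i ≤ k → 0 ≤ Tfun i (γ * L) κ)
    (x : ℕ → E) (hx : ∀ i ≤ k, x (i + 1) = x i - γ • gradient f (x i))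
    (ρ η : ℝ) (hρ : ρ = 1 - γ * L) (hη : η = 1 - γ * μ) :
    (f (x 0) - f (x (k + 1))) / γ ≥
      -η ^ 2 * ρ ^ 2 * Tfun (k + 1) (γ * L) κ / (η ^ 2 - ρ ^ 2) *
          (‖gradient f (x k)‖ ^ 2 / 2) +
        (Tfun k (γ * L) κ + (η - ρ)) / (η ^ 2 - ρ ^ 2) *
          (‖gradient f (x (k + 1))‖ ^ 2 / 2) := by
  have hκL : κ * (γ * L) = γ * μ := by rw [hκ]; field_simp
  have hTE (i : ℕ) : Tfun i (γ * L) κ = Efun i η - Efun i ρ := by rw [Tfun, hκL, hη, hρ]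
  have hpos : 0 < 1 + max κ 0 := by positivity
  rw [lt_div_iff₀ hpos] at hγL'
  have hρ_neg : ρ < 0 := by linarith
  have hρ_gt : -1 < ρ := by nlinarith [le_max_right κ 0]
  have hηρ : -ρ < η := by nlinarith [le_max_left κ 0]
  have hstep (i : ℕ) (hi : i ≤ k) : x i - x (i + 1) = γ • gradient f (x i) := by
    rw [hx i hi, sub_sub_cancel]
  have hstep₂ (i : ℕ) (hi : i < k) :
      x i - x (i + 2) = γ • (gradient f (x i) + gradient f (x (i + 1))) := by
    rw [smul_add, ← hstep i hi.le, ← hstep (i + 1) hi, sub_add_sub_cancel]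
  have slack {y z d : E} (h : y - z = γ • d) := hη ▸ hρ ▸
    interpolationSlack_nonneg hμL hdiff hsmooth hcurv hγ h
  have hneg {y z d : E} (h : y - z = γ • d) : z - y = γ • -d := by
    rw [smul_neg, ← h, neg_sub]
  have hTi (i : ℕ) (hi : i ≤ k) : Efun i ρ ≤ Efun i η := by
    rcases Nat.eq_zero_or_pos i with rfl | h
    · simp [Efun_zero]
    · exact sub_nonneg.mp (hTE i ▸ hT i h hi)
  have main := multistep_descent_with_slack hρ_neg hρ_gt hηρ (fun i => f (x i) / γ)
    (fun i => gradient f (x i)) k (fun i hi => slack (hstep i hi))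
    (fun i hi => slack (hneg (hstep i hi))) (fun i hi => slack (hstep₂ i hi))
    (fun i hi => slack (hneg (hstep₂ i hi))) hTi
  have hf := mul_nonneg
    (last_forward_weight_nonneg hρ_neg hηρ (Efun_nonneg_of_neg k hρ_neg hρ_gt) (hTi k le_rfl)
      (sub_one_mul_Efun_le k (by linarith)))
    (slack (hstep k le_rfl))
  have hb := mul_nonneg
    (last_backward_weight_nonneg hρ_neg hρ_gt hηρ (sub_nonneg.mpr (hTi k le_rfl)))
    (slack (hneg (hstep k le_rfl)))
  have hB : 0 < η ^ 2 - ρ ^ 2 := by nlinarith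
  have total := (add_nonneg hf hb).trans main
  rw [hTE, hTE, ge_iff_le, ← sub_nonneg]
  refine (div_nonneg total (mul_pos two_pos hB).le).trans_eq ?_
  field_simp
  ring
end
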